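/- arXiv:2306.04230 — 2 statements merged into one kernel-verified Lean document; each statement's English description precedes it below -/
import Mathlib

section
/- For the sequences generated by Algorithm 2, for every i ∈ I one has lim_{n→∞} ‖z_n − y_n^{(i)}‖ = 0, lim_{n→∞} ‖x_n − y_n^{(i)}‖ = 0, and lim_{n→∞} ‖T_i(x_n) − x_n‖ = 0. -/
open Filter Topology

theorem aux_xu (a α b : ℕ → ℝ) (ha : ∀ n, 0 ≤ a n) (hα : ∀ n, 0 < α n ∧ α n ≤ 1)
    (hs : ¬ Summable α) (hb : Tendsto b atTop (𝓝 0))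
    (hr : ∀ᶠ n in atTop, a (n+1) ≤ (1 - α n) * a n + α n * b n) :
    Tendsto a atTop (𝓝 0) := by
  rw [Metric.tendsto_atTop]
  intro ε hε
  have h1 : ∀ᶠ n in atTop, b n < ε / 2 := hb.eventually_lt_const (by linarith)
  obtain ⟨N, hN⟩ := eventually_atTop.1 (hr.and h1)
  have key : ∀ k, a (N + k) ≤ ε / 2 + Real.exp (-∑ j ∈ Finset.range k, α (N + j)) * a N := by
    intro k
    induction k with
    | zero => simp; linarith
    | succ k ih =>
      obtain ⟨h2, h3⟩ := hN (N + k) (by omega)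
      rw [Finset.sum_range_succ, neg_add, Real.exp_add]
      have h4 := Real.one_sub_le_exp_neg (α (N + k))
      obtain ⟨h5, h6⟩ := hα (N + k)
      have h7 : 0 ≤ Real.exp (-∑ j ∈ Finset.range k, α (N + j)) * a N :=
        mul_nonneg (Real.exp_pos _).le (ha N)
      have h8 := mul_le_mul_of_nonneg_left ih (sub_nonneg.2 h6)
      have h9 := mul_le_mul_of_nonneg_right h4 h7
      have h10 := mul_lt_mul_of_pos_left h3 h5
      have : a (N + (k + 1)) ≤ _ := h2
      nlinarith
  have hs' : ¬ Summable (fun j => α (N + j)) := by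
    intro h
    apply hs
    rw [← summable_nat_add_iff N]
    simpa [add_comm] using h
  have ht := (not_summable_iff_tendsto_nat_atTop_of_nonneg (fun j => (hα (N + j)).1.le)).1 hs'
  have h2 : Tendsto (fun k => Real.exp (-∑ j ∈ Finset.range k, α (N + j)) * a N) atTop (𝓝 0) := by
    have := (Real.tendsto_exp_neg_atTop_nhds_zero.comp ht).mul_const (a N)
    simpa using this
  obtain ⟨K, hK⟩ := eventually_atTop.1 (h2.eventually_lt_const (show (0:ℝ) < ε / 2 by linarith))
  refine ⟨N + K, fun n hn => ?_⟩
  obtain ⟨k, rfl⟩ : ∃ k, n = N + k := ⟨n - N, by omega⟩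
  have := key k
  have := hK k (by omega)
  rw [Real.dist_eq, sub_zero, abs_of_nonneg (ha _)]
  linarith

theorem aux_bdd (a b : ℕ → ℝ) (G : ℝ) (ha : ∀ n, 0 ≤ a n) (hb : Tendsto b atTop (𝓝 0))
    (hr : ∀ᶠ n in atTop, a (n+1) ≤ G + b n * a n) : ∃ C, ∀ᶠ n in atTop, a n ≤ C := by
  have h1 : ∀ᶠ n in atTop, b n < 1 / 2 := hb.eventually_lt_const (by norm_num)
  obtain ⟨N, hN⟩ := eventually_atTop.1 (hr.and h1)
  refine ⟨max (a N) (2 * G), eventually_atTop.2 ⟨N, fun n hn => ?_⟩⟩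
  induction n, hn using Nat.le_induction with
  | base => exact le_max_left _ _
  | succ n hn ih =>
    obtain ⟨h2, h3⟩ := hN n hn
    have := le_max_right (a N) (2 * G)
    have := mul_le_mul_of_nonneg_right h3.le (ha n)
    linarith

section
variable {H : Type*} [NormedAddCommGroup H] [InnerProductSpace ℝ H] 

theorem aux_grad [CompleteSpace H] (h : H → ℝ) (h' : H → H) (hc : ConvexOn ℝ Set.univ h)
    (hg : ∀ x, HasGradientAt h (h' x) x) (x y : H) :
    h x + inner ℝ (h' x) (y - x) ≤ h y := by
  have h1 : ConvexOn ℝ Set.univ (fun t : ℝ => h (AffineMap.lineMap x y t)) :=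
    hc.comp_affineMap (AffineMap.lineMap x y : ℝ →ᵃ[ℝ] H)
  have h2 : HasDerivAt (fun t : ℝ => h (AffineMap.lineMap x y t)) (inner ℝ (h' x) (y - x)) 0 := by
    have h3 := (hg x).hasFDerivAt
    have h4 : HasDerivAt (fun t : ℝ => (AffineMap.lineMap x y t : H)) (y - x) 0 :=
      AffineMap.hasDerivAt_lineMap
    have h5 := HasFDerivAt.comp_hasDerivAt_of_eq (0:ℝ) h3 h4 (by simp)
    simp only [InnerProductSpace.toDual_apply_apply] at h5
    exact h5
  have h3 := h1.le_slope_of_hasDerivAt (Set.mem_univ 0) (Set.mem_univ 1) zero_lt_one h2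
  simp [slope] at h3
  linarith

theorem aux_coco1 [CompleteSpace H] (h : H → ℝ) (h' : H → H) (hc : ConvexOn ℝ Set.univ h)
    (hg : ∀ x, HasGradientAt h (h' x) x) (L : ℝ) (hL : 0 < L)
    (hlip : ∀ x y, ‖h' x - h' y‖ ≤ (1 / L) * ‖x - y‖) (x y : H) :
    h x + inner ℝ (h' x) (y - x) + L / 4 * ‖h' y - h' x‖ ^ 2 ≤ h y := by
  set e := h' y - h' x with he
  set v := y - (L / 2) • e with hv
  have h1 := aux_grad h h' hc hg x v
  have h2 := aux_grad h h' hc hg v y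
  have e1 : v - x = (y - x) - (L / 2) • e := by rw [hv]; abel
  have e2 : y - v = (L / 2) • e := by rw [hv]; abel
  rw [e1, inner_sub_right, inner_smul_right] at h1
  rw [e2, inner_smul_right] at h2
  have h3 : ‖h' v - h' y‖ ≤ 1 / 2 * ‖e‖ := by
    have := hlip v y
    rw [← norm_neg (v - y), neg_sub, e2, norm_smul, Real.norm_of_nonneg (by positivity)] at this
    calc _ ≤ _ := this
      _ = _ := by field_simp
  have h4 : inner ℝ (h' y - h' v) e ≤ 1 / 2 * ‖e‖ * ‖e‖ := by
    refine (real_inner_le_norm _ _).trans ?_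
    rw [norm_sub_rev]
    gcongr
  have h5 : inner ℝ (h' y) e - inner ℝ (h' x) e = ‖e‖ ^ 2 := by
    rw [← inner_sub_left, ← he, real_inner_self_eq_norm_sq]
  rw [inner_sub_left] at h4
  nlinarith

theorem aux_contr [CompleteSpace H] (h : H → ℝ) (h' : H → H) (hc : ConvexOn ℝ Set.univ h)
    (hg : ∀ x, HasGradientAt h (h' x) x) (L : ℝ) (hL : 0 < L)
    (hlip : ∀ x y, ‖h' x - h' y‖ ≤ (1 / L) * ‖x - y‖) (l : ℝ) (hl : 0 < l) (hlL : l ≤ L) (x y : H) :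
    ‖(y - x) - l • (h' y - h' x)‖ ≤ ‖y - x‖ := by
  have h1 := aux_coco1 h h' hc hg L hL hlip x y
  have h2 := aux_coco1 h h' hc hg L hL hlip y x
  rw [← neg_sub y x, inner_neg_right, norm_sub_rev] at h2
  apply le_of_sq_le_sq _ (norm_nonneg _)
  rw [norm_sub_sq_real, inner_smul_right, norm_smul, Real.norm_of_nonneg hl.le, mul_pow]
  rw [real_inner_comm, inner_sub_left]
  have h3 : L / 2 * ‖h' y - h' x‖ ^ 2 ≤ inner ℝ (h' y) (y - x) - inner ℝ (h' x) (y - x) := by linarith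
  have h4 := mul_le_mul_of_nonneg_left h3 hl.le
  have h5 := mul_le_mul_of_nonneg_left hlL (show 0 ≤ l * ‖h' y - h' x‖ ^ 2 by positivity)
  nlinarith

theorem aux_prox (f : H → ℝ) (hf : ConvexOn ℝ Set.univ f) (l : ℝ) (hl : 0 < l) (q y : H)
    (hy : ∀ v, f y + (1 / (2 * l)) * ‖q - y‖ ^ 2 ≤ f v + (1 / (2 * l)) * ‖q - v‖ ^ 2) (v : H) :
    inner ℝ (q - y) (v - y) ≤ l * (f v - f y) := by
  have key : ∀ t : ℝ, 0 < t → t ≤ 1 →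
      inner ℝ (q - y) (v - y) ≤ l * (f v - f y) + t * (‖v - y‖ ^ 2 / 2) := by
    intro t ht ht1
    have h1 := hy ((1 - t) • y + t • v)
    have h2 := hf.2 (Set.mem_univ y) (Set.mem_univ v) (sub_nonneg.2 ht1) ht.le (by ring)
    have e : q - ((1 - t) • y + t • v) = (q - y) - t • (v - y) := by module
    rw [e, norm_sub_sq_real (q - y) (t • (v - y)), inner_smul_right, norm_smul, Real.norm_of_nonneg ht.le, mul_pow] at h1
    simp only [smul_eq_mul] at h2
    have h3 : f y + 1 / (2 * l) * ‖q - y‖ ^ 2 ≤ (1 - t) * f y + t * f v + 1 / (2 * l) *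
      (‖q - y‖ ^ 2 - 2 * (t * inner ℝ (q - y) (v - y)) + t ^ 2 * ‖v - y‖ ^ 2) := by linarith
    have h4 := mul_le_mul_of_nonneg_left h3 (show 0 ≤ 2 * l by positivity)
    have e5 : ∀ r : ℝ, 2 * l * (1 / (2 * l) * r) = r := fun r => by field_simp
    rw [mul_add, mul_add, e5, e5] at h4
    have h5 : t * inner ℝ (q - y) (v - y) ≤ t * (l * (f v - f y) + t * (‖v - y‖ ^ 2 / 2)) := by
      nlinarith
    exact le_of_mul_le_mul_left h5 ht
  have ht : Tendsto (fun t : ℝ => l * (f v - f y) + t * (‖v - y‖ ^ 2 / 2)) (𝓝[>] 0)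
      (𝓝 (l * (f v - f y) + 0 * (‖v - y‖ ^ 2 / 2))) := by
    apply Tendsto.mono_left _ nhdsWithin_le_nhds
    exact (Continuous.tendsto (by fun_prop) 0)
  rw [zero_mul, add_zero] at ht
  refine ge_of_tendsto ht ?_
  filter_upwards [Ioc_mem_nhdsGT (show (0:ℝ) < 1 by norm_num)] with t ht
  exact key t ht.1 ht.2

theorem aux_prox_diff (f : H → ℝ) (hf : ConvexOn ℝ Set.univ f) (l m : ℝ) (hl : 0 < l) (hm : 0 < m)
    (z y d z' y' d' : H)
    (hy : ∀ v, f y + (1 / (2 * l)) * ‖z + l • d - y‖ ^ 2 ≤ f v + (1 / (2 * l)) * ‖z + l • d - v‖ ^ 2)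
    (hy' : ∀ v, f y' + (1 / (2 * m)) * ‖z' + m • d' - y'‖ ^ 2
      ≤ f v + (1 / (2 * m)) * ‖z' + m • d' - v‖ ^ 2) :
    ‖y' - y‖ ≤ ‖(z' - z) + m • (d' - d)‖ + m * |1 / m - 1 / l| * ‖z - y‖ := by
  have h1 := aux_prox f hf l hl _ y hy y'
  have h2 := aux_prox f hf m hm _ y' hy' y
  have h3 : inner ℝ (l⁻¹ • (z + l • d - y)) (y' - y) ≤ f y' - f y := by
    rw [real_inner_smul_left, inv_mul_le_iff₀ hl]; exact h1
  have h4 : inner ℝ (m⁻¹ • (z' + m • d' - y')) (y - y') ≤ f y - f y' := by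
    rw [real_inner_smul_left, inv_mul_le_iff₀ hm]; exact h2
  rw [← neg_sub y' y, inner_neg_right] at h4
  have h5 : 0 ≤ m * inner ℝ (m⁻¹ • (z' + m • d' - y') - l⁻¹ • (z + l • d - y)) (y' - y) := by
    apply mul_nonneg hm.le
    rw [inner_sub_left]; linarith
  rw [← real_inner_smul_left] at h5
  have e : m • (m⁻¹ • (z' + m • d' - y') - l⁻¹ • (z + l • d - y))
      = ((z' - z) + m • (d' - d)) + (m * (1 / m - 1 / l)) • (z - y) - (y' - y) := by
    have hm' := hm.ne'
    have hl' := hl.ne'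
    match_scalars <;> field_simp <;> ring
  rw [e, inner_sub_left, real_inner_self_eq_norm_sq] at h5
  have h6 := real_inner_le_norm (((z' - z) + m • (d' - d)) + (m * (1 / m - 1 / l)) • (z - y)) (y' - y)
  have h7 : ‖y' - y‖ ≤ ‖((z' - z) + m • (d' - d)) + (m * (1 / m - 1 / l)) • (z - y)‖ := by
    by_contra hcon
    push Not at hcon
    have h0 : 0 < ‖y' - y‖ := (norm_nonneg _).trans_lt hcon
    nlinarith
  refine h7.trans ((norm_add_le _ _).trans ?_)
  rw [norm_smul, norm_mul, Real.norm_of_nonneg hm.le, Real.norm_eq_abs]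

theorem aux_firm_lip (T : H → H) (hT : ∀ x y, ‖T x - T y‖ ^ 2 ≤ inner ℝ (T x - T y) (x - y))
    (x y : H) : ‖T x - T y‖ ≤ ‖x - y‖ := by
  have h1 := (hT x y).trans (real_inner_le_norm _ _)
  by_contra hcon
  push Not at hcon
  have h0 : 0 < ‖T x - T y‖ := (norm_nonneg _).trans_lt hcon
  nlinarith

theorem aux_firm_fix (T : H → H) (hT : ∀ x y, ‖T x - T y‖ ^ 2 ≤ inner ℝ (T x - T y) (x - y))
    (s : H) (hs : T s = s) (y : H) : ‖T y - s‖ ^ 2 ≤ ‖y - s‖ ^ 2 - ‖y - T y‖ ^ 2 := by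
  have h1 := hT y s
  rw [hs] at h1
  have e : y - T y = (y - s) - (T y - s) := by abel
  rw [e, norm_sub_sq_real (y - s) (T y - s), real_inner_comm]
  linarith

theorem aux_prox_fix (f : H → ℝ) (hf : ConvexOn ℝ Set.univ f) (l : ℝ) (hl : 0 < l) (z y d s : H)
    (hy : ∀ v, f y + (1 / (2 * l)) * ‖z + l • d - y‖ ^ 2 ≤ f v + (1 / (2 * l)) * ‖z + l • d - v‖ ^ 2) :
    ‖y - s‖ ^ 2 ≤ ‖z - s‖ ^ 2 - ‖z - y‖ ^ 2 + 2 * l * (f s - f y + ‖d‖ * ‖y - s‖) := by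
  have h1 := aux_prox f hf l hl _ y hy s
  have e0 : z + l • d - y = (z - y) + l • d := by abel
  have e : z - s = (z - y) + (y - s) := by abel
  rw [e0, inner_add_left, real_inner_smul_left, ← neg_sub y s, inner_neg_right, inner_neg_right] at h1
  have h2 := mul_le_mul_of_nonneg_left (real_inner_le_norm d (y - s)) hl.le
  rw [e, norm_add_sq_real]
  linarith

/-- norm squared of average -/
theorem aux_avg_sq (M : ℕ) (hM : 1 ≤ M) (w : ℕ → H) (s : H) :
    (M:ℝ) * ‖(M : ℝ)⁻¹ • ∑ i ∈ Finset.Icc 1 M, w i - s‖ ^ 2 ≤ ∑ i ∈ Finset.Icc 1 M, ‖w i - s‖ ^ 2 := by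
  have hM0 : (0:ℝ) < M := by exact_mod_cast hM
  have e : (M : ℝ)⁻¹ • ∑ i ∈ Finset.Icc 1 M, w i - s = (M : ℝ)⁻¹ • ∑ i ∈ Finset.Icc 1 M, (w i - s) := by
    rw [Finset.sum_sub_distrib, Finset.sum_const, Nat.card_Icc, smul_sub]
    simp only [Nat.add_sub_cancel]
    rw [← Nat.cast_smul_eq_nsmul ℝ M s, smul_smul, inv_mul_cancel₀ hM0.ne', one_smul]
  have h1 : ‖∑ i ∈ Finset.Icc 1 M, (w i - s)‖ ^ 2 ≤ M * ∑ i ∈ Finset.Icc 1 M, ‖w i - s‖ ^ 2 := by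
    have := sq_sum_le_card_mul_sum_sq (s := Finset.Icc 1 M) (f := fun i => ‖w i - s‖)
    simp only [Nat.card_Icc, Nat.add_sub_cancel] at this
    refine le_trans ?_ this
    gcongr
    exact norm_sum_le _ _
  rw [e, norm_smul, mul_pow, Real.norm_of_nonneg (by positivity)]
  calc (M:ℝ) * ((M:ℝ)⁻¹ ^ 2 * ‖∑ i ∈ Finset.Icc 1 M, (w i - s)‖ ^ 2)
      ≤ (M:ℝ) * ((M:ℝ)⁻¹ ^ 2 * (M * ∑ i ∈ Finset.Icc 1 M, ‖w i - s‖ ^ 2)) := by gcongr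
    _ = _ := by field_simp

theorem aux_w_sq (a : ℝ) (ha : 0 < a) (ha1 : a ≤ 1) (u t s : H) :
    ‖a • u + (1 - a) • t - s‖ ^ 2 ≤ a * ‖u - s‖ ^ 2 + ‖t - s‖ ^ 2 := by
  have e : a • u + (1 - a) • t - s = a • (u - s) + (1 - a) • (t - s) := by module
  have h1 : ‖a • u + (1 - a) • t - s‖ ≤ a * ‖u - s‖ + (1 - a) * ‖t - s‖ := by
    rw [e]
    refine (norm_add_le _ _).trans ?_
    rw [norm_smul, norm_smul, Real.norm_of_nonneg ha.le, Real.norm_of_nonneg (sub_nonneg.2 ha1)]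
  have h2 := pow_le_pow_left₀ (norm_nonneg _) h1 2
  nlinarith [mul_nonneg (mul_nonneg ha.le (sub_nonneg.2 ha1)) (sq_nonneg (‖u - s‖ - ‖t - s‖)), mul_nonneg ha.le (sq_nonneg ‖t - s‖)]
theorem aux_avg (M : ℕ) (w : ℕ → H) :
    ‖(M : ℝ)⁻¹ • ∑ i ∈ Finset.Icc 1 M, w i‖ ≤ (M:ℝ)⁻¹ * ∑ i ∈ Finset.Icc 1 M, ‖w i‖ := by
  rw [norm_smul, Real.norm_of_nonneg (by positivity)]
  gcongr
  exact norm_sum_le _ _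

theorem aux_ystep [CompleteSpace H] (f : H → ℝ) (hf : ConvexOn ℝ Set.univ f)
    (h : H → ℝ) (h' : H → H) (hc : ConvexOn ℝ Set.univ h)
    (hg : ∀ x, HasGradientAt h (h' x) x) (L : ℝ) (hL : 0 < L)
    (hlip : ∀ x y, ‖h' x - h' y‖ ≤ (1 / L) * ‖x - y‖)
    (l m : ℝ) (hl : 0 < l) (hm : 0 < m) (hmL : m ≤ L) (b b' : ℝ) (hb : 0 ≤ b) (hb' : 0 ≤ b')
    (z y d z' y' d' d0 : H)
    (hd : d = -(h' z) + b • d0) (hd' : d' = -(h' z') + b' • d)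
    (hy : ∀ v, f y + (1 / (2 * l)) * ‖z + l • d - y‖ ^ 2 ≤ f v + (1 / (2 * l)) * ‖z + l • d - v‖ ^ 2)
    (hy' : ∀ v, f y' + (1 / (2 * m)) * ‖z' + m • d' - y'‖ ^ 2
      ≤ f v + (1 / (2 * m)) * ‖z' + m • d' - v‖ ^ 2) :
    ‖y' - y‖ ≤ ‖z' - z‖ + m * (b' * ‖d‖ + b * ‖d0‖) + m * |1 / m - 1 / l| * ‖z - y‖ := by
  have h1 := aux_prox_diff f hf l m hl hm z y d z' y' d' hy hy'
  have h2 := aux_contr h h' hc hg L hL hlip m hm hmL z z'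
  have e : (z' - z) + m • (d' - d) = ((z' - z) - m • (h' z' - h' z)) + m • (b' • d - b • d0) := by
    have : d' - d = -(h' z' - h' z) + (b' • d - b • d0) := by
      rw [hd']; nth_rw 2 [hd]; abel
    rw [this]; module
  have h3 : ‖(z' - z) + m • (d' - d)‖ ≤ ‖z' - z‖ + m * (b' * ‖d‖ + b * ‖d0‖) := by
    rw [e]
    refine (norm_add_le _ _).trans (add_le_add h2 ?_)
    rw [norm_smul, Real.norm_of_nonneg hm.le]
    gcongr
    refine (norm_sub_le _ _).trans ?_
    rw [norm_smul, norm_smul, Real.norm_of_nonneg hb, Real.norm_of_nonneg hb']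
  linarith

theorem aux_wstep (a a' K : ℝ) (ha' : a' ≤ 1) (u t t' : H) (hK : ‖u‖ + ‖t‖ ≤ K) :
    ‖(a' • u + (1 - a') • t') - (a • u + (1 - a) • t)‖ ≤ |a' - a| * K + (1 - a') * ‖t' - t‖ := by
  have e : (a' • u + (1 - a') • t') - (a • u + (1 - a) • t)
      = (a' - a) • (u - t) + (1 - a') • (t' - t) := by module
  rw [e]
  refine (norm_add_le _ _).trans ?_
  rw [norm_smul, norm_smul, Real.norm_eq_abs, Real.norm_of_nonneg (sub_nonneg.2 ha')]
  gcongr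
  exact (norm_sub_le _ _).trans hK
end

theorem alg2_residuals_tendsto_zero
    {H : Type*} [NormedAddCommGroup H] [InnerProductSpace ℝ H] [CompleteSpace H]
    (M : ℕ) (hM : 1 ≤ M)
    (f h : ℕ → H → ℝ) (h' : ℕ → H → H) (L : ℕ → ℝ) (T : ℕ → H → H)
    (hf_cont : ∀ i ∈ Finset.Icc 1 M, Continuous (f i))
    (hf_conv : ∀ i ∈ Finset.Icc 1 M, ConvexOn ℝ Set.univ (f i))
    (hh_conv : ∀ i ∈ Finset.Icc 1 M, ConvexOn ℝ Set.univ (h i))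
    (hh_grad : ∀ i ∈ Finset.Icc 1 M, ∀ x : H, HasGradientAt (h i) (h' i x) x)
    (hL_pos : ∀ i ∈ Finset.Icc 1 M, 0 < L i)
    (hh_lip : ∀ i ∈ Finset.Icc 1 M, ∀ x y : H, ‖h' i x - h' i y‖ ≤ (1 / L i) * ‖x - y‖)
    (hT_firm : ∀ i ∈ Finset.Icc 1 M, ∀ x y : H,
      ‖T i x - T i y‖ ^ 2 ≤ @inner ℝ H _ (T i x - T i y) (x - y))
    (S : Set H) (hS : S = ⋂ i ∈ Finset.Icc 1 M, {x : H | T i x = x}) (hS_ne : S.Nonempty)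
    (θ lam β α : ℕ → ℝ) (σ : ℝ) (hσ : 1 ≤ σ)
    (hθ_range : ∀ n, 0 ≤ θ n ∧ θ n < 1)
    (hlam_pos : ∀ n, 0 < lam n)
    (hlam_le : ∀ n, ∀ i ∈ Finset.Icc 1 M, lam n ≤ 2 * L i)
    (hβ_range : ∀ n, 0 < β n ∧ β n ≤ 1)
    (hα_range : ∀ n, 0 < α n ∧ α n ≤ 1)
    (hθ_anti : Antitone θ) (hlam_anti : Antitone lam)
    (hβ_anti : Antitone β) (hα_anti : Antitone α)
    (hθ_lim : Tendsto θ atTop (𝓝 0)) (hlam_lim : Tendsto lam atTop (𝓝 0))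
    (hβ_lim : Tendsto β atTop (𝓝 0)) (hα_lim : Tendsto α atTop (𝓝 0))
    (hC1 : ¬ Summable α)
    (hC2 : Tendsto (fun n => (1 / α (n+1)) * |1 / lam (n+1) - 1 / lam n|) atTop (𝓝 0))
    (hC3 : Tendsto (fun n => (1 / lam (n+1)) * |1 - α n / α (n+1)|) atTop (𝓝 0))
    (hC4 : Tendsto (fun n => α n / lam n) atTop (𝓝 0))
    (hC5 : Tendsto (fun n => θ n / (α (n+1) * lam (n+1))) atTop (𝓝 0))
    (hC6 : ∀ n, lam n / lam (n+1) ≤ σ)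
    (hC7 : Tendsto (fun n => β n / α (n+1)) atTop (𝓝 0))
    (x z : ℕ → H) (w y d : ℕ → ℕ → H) (u : ℕ → H)
    (hd1 : ∀ i ∈ Finset.Icc 1 M, d 1 i = -(h' i (z 0)))
    (hz : ∀ n ≥ 1, z n = x n + θ n • (x n - x (n-1)))
    (hd : ∀ n ≥ 1, ∀ i ∈ Finset.Icc 1 M, d (n+1) i = -(h' i (z n)) + β n • d n i)
    (hy : ∀ n ≥ 1, ∀ i ∈ Finset.Icc 1 M, ∀ v : H,
      f i (y n i) + (1 / (2 * lam n)) * ‖z n + lam n • d (n+1) i - y n i‖ ^ 2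
        ≤ f i v + (1 / (2 * lam n)) * ‖z n + lam n • d (n+1) i - v‖ ^ 2)
    (hw : ∀ n ≥ 1, ∀ i ∈ Finset.Icc 1 M,
      w n (i+1) = α n • u i + (1 - α n) • T i (y n i))
    (hx : ∀ n ≥ 1, x (n+1) = (M : ℝ)⁻¹ • ∑ i ∈ Finset.Icc 1 M, w n (i+1))
    (hy_bdd : ∀ i ∈ Finset.Icc 1 M, ∃ C, ∀ n ≥ 1, ‖y n i‖ ≤ C)
    : ∀ i ∈ Finset.Icc 1 M,
      Tendsto (fun n => ‖z n - y n i‖) atTop (𝓝 0) ∧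
      Tendsto (fun n => ‖x n - y n i‖) atTop (𝓝 0) ∧
      Tendsto (fun n => ‖T i (x n) - x n‖) atTop (𝓝 0) := by
  have hM0 : (0:ℝ) < M := by exact_mod_cast hM
  obtain ⟨s, hs⟩ := hS_ne
  have hTs : ∀ i ∈ Finset.Icc 1 M, T i s = s := by
    intro i hi
    rw [hS] at hs
    simp only [Set.mem_iInter] at hs
    exact hs i hi
  choose! C hC using hy_bdd
  have hTy : ∀ i ∈ Finset.Icc 1 M, ∀ n ≥ 1, ‖T i (y n i)‖ ≤ C i + 2 * ‖s‖ := by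
    intro i hi n hn
    have h1 := aux_firm_lip (T i) (hT_firm i hi) (y n i) s
    rw [hTs i hi] at h1
    have h2 := norm_sub_le (y n i) s
    have h3 := hC i hi n hn
    have h4 : ‖T i (y n i)‖ ≤ ‖T i (y n i) - s‖ + ‖s‖ := by
      simpa using norm_add_le (T i (y n i) - s) s
    linarith
  -- boundedness of x
  obtain ⟨R, hR⟩ : ∃ R, ∀ n ≥ 2, ‖x n‖ ≤ R := by
    refine ⟨(M:ℝ)⁻¹ * ∑ i ∈ Finset.Icc 1 M, (‖u i‖ + (C i + 2 * ‖s‖)), fun n hn => ?_⟩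
    obtain ⟨k, rfl⟩ : ∃ k, n = k + 1 := ⟨n - 1, by omega⟩
    rw [hx k (by omega)]
    refine (aux_avg M (fun i => w k (i+1))).trans ?_
    gcongr with i hi
    rw [hw k (by omega) i hi]
    refine (norm_add_le _ _).trans ?_
    obtain ⟨h1, h2⟩ := hα_range k
    rw [norm_smul, norm_smul, Real.norm_of_nonneg h1.le, Real.norm_of_nonneg (sub_nonneg.2 h2)]
    have h3 := hTy i hi k (by omega)
    have h4 := norm_nonneg (u i)
    have h5 := norm_nonneg (T i (y k i))
    nlinarith
  have hR0 : 0 ≤ R := (norm_nonneg _).trans (hR 2 le_rfl)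
  have hzx : ∀ n ≥ 3, ‖z n - x n‖ ≤ θ n * (2 * R) := by
    intro n hn
    rw [hz n (by omega), add_sub_cancel_left, norm_smul, Real.norm_of_nonneg (hθ_range n).1]
    have := hθ_range n
    gcongr
    · exact this.1
    · have := norm_sub_le (x n) (x (n-1))
      have := hR n (by omega)
      have := hR (n-1) (by omega)
      linarith
  have hzb : ∀ n ≥ 3, ‖z n‖ ≤ 3 * R := by
    intro n hn
    have h1 := hzx n hn
    have h2 := hR n (by omega)
    have h3 : ‖z n‖ ≤ ‖z n - x n‖ + ‖x n‖ := by simpa using norm_add_le (z n - x n) (x n)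
    have := hθ_range n
    nlinarith
  have hdb : ∀ i ∈ Finset.Icc 1 M, ∃ D, ∀ᶠ n in atTop, ‖d n i‖ ≤ D := by
    intro i hi
    apply aux_bdd (fun n => ‖d n i‖) β (‖h' i 0‖ + (1 / L i) * (3 * R)) (fun n => norm_nonneg _) hβ_lim
    filter_upwards [eventually_ge_atTop 3] with n hn
    rw [hd n (by omega) i hi]
    refine (norm_add_le _ _).trans ?_
    rw [norm_neg, norm_smul, Real.norm_of_nonneg (hβ_range n).1.le]
    gcongr
    have h1 := hh_lip i hi (z n) 0
    have h2 : ‖h' i (z n)‖ ≤ ‖h' i (z n) - h' i 0‖ + ‖h' i 0‖ := by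
      simpa using norm_add_le (h' i (z n) - h' i 0) (h' i 0)
    rw [sub_zero] at h1
    have h3 := hL_pos i hi
    have h4 : 1 / L i * ‖z n‖ ≤ 1 / L i * (3 * R) := by
      gcongr
      exact hzb n hn
    linarith
  choose! D hD using hdb
  have hfb : ∀ i ∈ Finset.Icc 1 M, ∃ F, ∀ n ≥ 1, - f i (y n i) ≤ F := by
    intro i hi
    set q := z 1 + lam 1 • d (1+1) i - y 1 i with hq
    refine ⟨(lam 1)⁻¹ * (‖q‖ * (C i + ‖y 1 i‖)) - f i (y 1 i), fun n hn => ?_⟩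
    have h1 := aux_prox (f i) (hf_conv i hi) (lam 1) (hlam_pos 1) _ (y 1 i) (hy 1 le_rfl i hi) (y n i)
    have h2 : -inner ℝ q (y n i - y 1 i) ≤ ‖q‖ * (C i + ‖y 1 i‖) := by
      have h3 := neg_le_of_abs_le (abs_real_inner_le_norm q (y n i - y 1 i))
      have h4 : ‖q‖ * ‖y n i - y 1 i‖ ≤ ‖q‖ * (C i + ‖y 1 i‖) := by
        gcongr
        refine (norm_sub_le _ _).trans ?_
        gcongr
        exact hC i hi n hn
      linarith
    have h5 : -f i (y n i) + f i (y 1 i) ≤ (lam 1)⁻¹ * (‖q‖ * (C i + ‖y 1 i‖)) := by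
      rw [le_inv_mul_iff₀ (hlam_pos 1)]
      linarith
    linarith
  choose! F hF using hfb
  have hlam' : Tendsto (fun n => lam (n+1)) atTop (𝓝 0) := hlam_lim.comp (tendsto_add_atTop_nat 1)
  -- asymptotic regularity
  have hreg : Tendsto (fun n => ‖x (n+1) - x n‖) atTop (𝓝 0) := by
    set b : ℕ → ℕ → ℝ := fun i n =>
      (‖u i‖ + (C i + 2 * ‖s‖)) * (lam (n+1) * ((1 / lam (n+1)) * |1 - α n / α (n+1)|))
      + (4 * R) * (lam (n+1) * (θ n / (α (n+1) * lam (n+1))))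
      + (2 * D i) * (lam (n+1) * (β n / α (n+1)))
      + (3 * R + C i) * (lam (n+1) * ((1 / α (n+1)) * |1 / lam (n+1) - 1 / lam n|)) with hb
    have hbl : ∀ i, Tendsto (b i) atTop (𝓝 0) := by
      intro i
      have h1 := ((((hlam'.mul hC3).const_mul (‖u i‖ + (C i + 2 * ‖s‖))).add
        ((hlam'.mul hC5).const_mul (4 * R))).add ((hlam'.mul hC7).const_mul (2 * D i))).add
        ((hlam'.mul hC2).const_mul (3 * R + C i))
      simp only [mul_zero, add_zero] at h1
      exact h1
    have hbs : Tendsto (fun n => (M:ℝ)⁻¹ * ∑ i ∈ Finset.Icc 1 M, b i n) atTop (𝓝 0) := by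
      have := (tendsto_finsetSum (Finset.Icc 1 M) (fun i _ => hbl i)).const_mul ((M:ℝ)⁻¹)
      simpa using this
    have hα' : ¬ Summable (fun n => α (n+1)) := by
      rw [summable_nat_add_iff 1]; exact hC1
    refine aux_xu _ (fun n => α (n+1)) _ (fun n => norm_nonneg _) (fun n => hα_range (n+1)) hα' hbs ?_
    have hDall : ∀ᶠ n in atTop, ∀ i ∈ Finset.Icc 1 M, ‖d n i‖ ≤ D i :=
      (Finset.eventually_all _).2 hD
    have hLall : ∀ᶠ n in atTop, ∀ i ∈ Finset.Icc 1 M, lam (n+1) ≤ L i :=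
      (Finset.eventually_all _).2 (fun i hi =>
        (hlam'.eventually_lt_const (hL_pos i hi)).mono (fun n hn => hn.le))
    filter_upwards [hDall, (tendsto_add_atTop_nat 1).eventually hDall, hLall, eventually_ge_atTop 3]
      with n hD0 hD1 hL hn
    have hi_step : ∀ i ∈ Finset.Icc 1 M, ‖w (n+1) (i+1) - w n (i+1)‖
        ≤ (1 - α (n+1)) * ‖x (n+1) - x n‖ + α (n+1) * b i n := by
      intro i hi
      rw [hw (n+1) (by omega) i hi, hw n (by omega) i hi]
      have hαp := (hα_range (n+1)).1
      have hα1 := (hα_range (n+1)).2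
      have hlp := hlam_pos (n+1)
      have h1 := aux_wstep (α n) (α (n+1)) (‖u i‖ + (C i + 2 * ‖s‖)) hα1 (u i)
        (T i (y n i)) (T i (y (n+1) i)) (by
          have := hTy i hi n (by omega)
          linarith)
      have h2 := aux_firm_lip (T i) (hT_firm i hi) (y (n+1) i) (y n i)
      have h3 := aux_ystep (f i) (hf_conv i hi) (h i) (h' i) (hh_conv i hi) (hh_grad i hi) (L i)
        (hL_pos i hi) (hh_lip i hi) (lam n) (lam (n+1)) (hlam_pos n) hlp (hL i hi)
        (β n) (β (n+1)) (hβ_range n).1.le (hβ_range (n+1)).1.le (z n) (y n i) (d (n+1) i)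
        (z (n+1)) (y (n+1) i) (d (n+1+1) i) (d n i) (hd n (by omega) i hi)
        (hd (n+1) (by omega) i hi) (hy n (by omega) i hi) (hy (n+1) (by omega) i hi)
      have h4 : ‖z (n+1) - z n‖ ≤ ‖x (n+1) - x n‖ + θ n * (4 * R) := by
        have e : z (n+1) - z n = (z (n+1) - x (n+1)) + (x (n+1) - x n) - (z n - x n) := by abel
        have h5 := norm_sub_le ((z (n+1) - x (n+1)) + (x (n+1) - x n)) (z n - x n)
        have h6 := norm_add_le (z (n+1) - x (n+1)) (x (n+1) - x n)
        have h7 := hzx n hn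
        have h8 := hzx (n+1) (by omega)
        have h9 : θ (n+1) * (2 * R) ≤ θ n * (2 * R) := by
          gcongr
          exact hθ_anti (Nat.le_succ n)
        rw [e]
        linarith
      have h5 : β (n+1) * ‖d (n+1) i‖ + β n * ‖d n i‖ ≤ β n * (2 * D i) := by
        have h6 : β (n+1) * ‖d (n+1) i‖ ≤ β n * D i :=
          mul_le_mul (hβ_anti (Nat.le_succ n)) (hD1 i hi) (norm_nonneg _) (hβ_range n).1.le
        have h7 := mul_le_mul_of_nonneg_left (hD0 i hi) (hβ_range n).1.le
        linarith
      have h6 : ‖z n - y n i‖ ≤ 3 * R + C i := by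
        have := norm_sub_le (z n) (y n i)
        have := hzb n hn
        have := hC i hi n (by omega)
        linarith
      have h7 := mul_le_mul_of_nonneg_left h5 hlp.le
      have h8 := mul_le_mul_of_nonneg_left h6
        (mul_nonneg hlp.le (abs_nonneg (1 / lam (n+1) - 1 / lam n)))
      set E := θ n * (4 * R) + lam (n+1) * (β n * (2 * D i))
        + lam (n+1) * |1 / lam (n+1) - 1 / lam n| * (3 * R + C i) with hE
      have hE0 : 0 ≤ E := by
        have a1 : 0 ≤ θ n * (4 * R) := mul_nonneg (hθ_range n).1 (by linarith)
        have a2 : 0 ≤ D i := (norm_nonneg _).trans (hD0 i hi)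
        have a3 : 0 ≤ 3 * R + C i := (norm_nonneg _).trans h6
        have a4 := (hβ_range n).1
        positivity
      have h9 : ‖T i (y (n+1) i) - T i (y n i)‖ ≤ ‖x (n+1) - x n‖ + E := by
        rw [hE]; linarith
      have h10 := mul_le_mul_of_nonneg_left h9 (sub_nonneg.2 hα1)
      have habs : |α (n+1) - α n| = α (n+1) * |1 - α n / α (n+1)| := by
        rw [← abs_of_pos hαp, ← abs_mul, abs_of_pos hαp]
        congr 1
        field_simp
      have h11 : α (n+1) * b i n = |α (n+1) - α n| * (‖u i‖ + (C i + 2 * ‖s‖)) + E := by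
        rw [habs, hb, hE]
        beta_reduce
        have := hαp.ne'
        have := hlp.ne'
        generalize |1 - α n / α (n+1)| = A1
        generalize |1 / lam (n+1) - 1 / lam n| = A2
        field_simp
        ring
      rw [h11]
      nlinarith
    rw [hx (n+1) (by omega), hx n (by omega), ← smul_sub, ← Finset.sum_sub_distrib]
    rw [← hx n (by omega)]
    refine (aux_avg M (fun i => w (n+1) (i+1) - w n (i+1))).trans ?_
    have h1 := mul_le_mul_of_nonneg_left (Finset.sum_le_sum hi_step) (inv_nonneg.2 hM0.le)
    refine h1.trans (le_of_eq ?_)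
    rw [Finset.sum_add_distrib, Finset.sum_const, Nat.card_Icc, ← Finset.mul_sum, nsmul_eq_mul]
    simp only [Nat.add_sub_cancel]
    field_simp
  -- the residuals
  have hres : Tendsto (fun n => ∑ i ∈ Finset.Icc 1 M,
      (‖z n - y n i‖ ^ 2 + ‖y n i - T i (y n i)‖ ^ 2)) atTop (𝓝 0) := by
    set K : ℝ := 4 * R * (R + ‖s‖) + 4 * R ^ 2 with hK
    set K3 : ℕ → ℝ := fun i => f i s + F i + D i * (C i + ‖s‖) with hK3
    set g : ℕ → ℕ → ℝ := fun i n => (2 * (R + ‖s‖)) * ‖x (n+1) - x n‖ + K * θ n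
      + ‖u i - s‖ ^ 2 * α n + (2 * K3 i) * lam n with hg
    have hgl : ∀ i, Tendsto (g i) atTop (𝓝 0) := by
      intro i
      have h1 := (((hreg.const_mul (2 * (R + ‖s‖))).add (hθ_lim.const_mul K)).add
        (hα_lim.const_mul (‖u i - s‖ ^ 2))).add (hlam_lim.const_mul (2 * K3 i))
      simpa using h1
    have hgs : Tendsto (fun n => ∑ i ∈ Finset.Icc 1 M, g i n) atTop (𝓝 0) := by
      have := tendsto_finsetSum (Finset.Icc 1 M) (fun i _ => hgl i)
      simpa using this
    have hDall : ∀ᶠ n in atTop, ∀ i ∈ Finset.Icc 1 M, ‖d n i‖ ≤ D i :=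
      (Finset.eventually_all _).2 hD
    refine squeeze_zero' (Eventually.of_forall fun n => Finset.sum_nonneg fun i _ => by positivity) ?_ hgs
    filter_upwards [(tendsto_add_atTop_nat 1).eventually hDall, eventually_ge_atTop 3] with n hD1 hn
    have hxs : ∀ m ≥ 2, ‖x m - s‖ ≤ R + ‖s‖ := fun m hm =>
      (norm_sub_le _ _).trans (by have := hR m hm; linarith)
    have hzs : ‖z n - s‖ ^ 2 ≤ ‖x n - s‖ ^ 2 + K * θ n := by
      have h1 : ‖z n - s‖ ≤ ‖x n - s‖ + θ n * (2 * R) := by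
        have e : z n - s = (x n - s) + (z n - x n) := by abel
        rw [e]
        exact (norm_add_le _ _).trans (by have := hzx n hn; linarith)
      have h2 := pow_le_pow_left₀ (norm_nonneg _) h1 2
      have h3 := hxs n (by omega)
      obtain ⟨h4, h5⟩ := hθ_range n
      have h6 : θ n * R * ‖x n - s‖ ≤ θ n * R * (R + ‖s‖) := by gcongr
      have h7 : θ n * (θ n * R ^ 2) ≤ 1 * (θ n * R ^ 2) := by gcongr
      rw [hK]
      nlinarith
    have hxd : ‖x n - s‖ ^ 2 - ‖x (n+1) - s‖ ^ 2 ≤ (2 * (R + ‖s‖)) * ‖x (n+1) - x n‖ := by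
      have h1 : ‖x n - s‖ - ‖x (n+1) - s‖ ≤ ‖x (n+1) - x n‖ := by
        have e : x n - s = (x (n+1) - s) - (x (n+1) - x n) := by abel
        have := norm_sub_le (x (n+1) - s) (x (n+1) - x n)
        rw [← e] at this
        linarith
      have h2 := hxs n (by omega)
      have h3 := hxs (n+1) (by omega)
      have h4 := mul_le_mul_of_nonneg_right h1
        (add_nonneg (norm_nonneg (x n - s)) (norm_nonneg (x (n+1) - s)))
      have h5 := mul_le_mul_of_nonneg_left (add_le_add h2 h3) (norm_nonneg (x (n+1) - x n))
      nlinarith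
    have hi_step : ∀ i ∈ Finset.Icc 1 M,
        ‖z n - y n i‖ ^ 2 + ‖y n i - T i (y n i)‖ ^ 2 ≤ g i n + (‖x (n+1) - s‖ ^ 2 - ‖w n (i+1) - s‖ ^ 2) := by
      intro i hi
      rw [hw n (by omega) i hi]
      have h1 := aux_w_sq (α n) (hα_range n).1 (hα_range n).2 (u i) (T i (y n i)) s
      have h2 := aux_firm_fix (T i) (hT_firm i hi) s (hTs i hi) (y n i)
      have h3 := aux_prox_fix (f i) (hf_conv i hi) (lam n) (hlam_pos n) (z n) (y n i) (d (n+1) i) s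
        (hy n (by omega) i hi)
      have h4 : f i s - f i (y n i) + ‖d (n+1) i‖ * ‖y n i - s‖ ≤ K3 i := by
        have a1 := hF i hi n (by omega)
        have a2 : ‖d (n+1) i‖ * ‖y n i - s‖ ≤ D i * (C i + ‖s‖) := by
          apply mul_le_mul (hD1 i hi) _ (norm_nonneg _) ((norm_nonneg _).trans (hD1 i hi))
          exact (norm_sub_le _ _).trans (by have := hC i hi n (by omega); linarith)
        rw [hK3]
        simp only
        linarith
      have h5 := mul_le_mul_of_nonneg_left h4 (show 0 ≤ 2 * lam n by have := hlam_pos n; positivity)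
      rw [hg]
      simp only
      linarith
    refine (Finset.sum_le_sum hi_step).trans ?_
    rw [Finset.sum_add_distrib, Finset.sum_sub_distrib, Finset.sum_const, Nat.card_Icc, nsmul_eq_mul]
    have h1 := aux_avg_sq M hM (fun i => w n (i+1)) s
    rw [← hx n (by omega)] at h1
    simp only [Nat.add_sub_cancel]
    linarith
  intro i hi
  have hsq : ∀ a : ℕ → ℝ, (∀ n, 0 ≤ a n) → (∀ n, a n ^ 2 ≤ ∑ i ∈ Finset.Icc 1 M,
      (‖z n - y n i‖ ^ 2 + ‖y n i - T i (y n i)‖ ^ 2)) → Tendsto a atTop (𝓝 0) := by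
    intro a ha h1
    have h2 := squeeze_zero (fun n => sq_nonneg (a n)) h1 hres
    have h3 := h2.sqrt
    simpa [Real.sqrt_sq (ha _)] using h3
  have hle : ∀ n, ‖z n - y n i‖ ^ 2 + ‖y n i - T i (y n i)‖ ^ 2 ≤ ∑ i ∈ Finset.Icc 1 M,
      (‖z n - y n i‖ ^ 2 + ‖y n i - T i (y n i)‖ ^ 2) := fun n =>
    Finset.single_le_sum (f := fun i => ‖z n - y n i‖ ^ 2 + ‖y n i - T i (y n i)‖ ^ 2)
      (fun j _ => by positivity) hi
  have hzy : Tendsto (fun n => ‖z n - y n i‖) atTop (𝓝 0) :=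
    hsq _ (fun n => norm_nonneg _) (fun n => by
      have := hle n
      have := sq_nonneg ‖y n i - T i (y n i)‖
      linarith)
  have hyT : Tendsto (fun n => ‖y n i - T i (y n i)‖) atTop (𝓝 0) :=
    hsq _ (fun n => norm_nonneg _) (fun n => by
      have := hle n
      have := sq_nonneg ‖z n - y n i‖
      linarith)
  have hxy : Tendsto (fun n => ‖x n - y n i‖) atTop (𝓝 0) := by
    have h1 : Tendsto (fun n => θ n * (2 * R) + ‖z n - y n i‖) atTop (𝓝 0) := by
      simpa using (hθ_lim.mul_const (2 * R)).add hzy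
    refine squeeze_zero' (Eventually.of_forall fun n => norm_nonneg _) ?_ h1
    filter_upwards [eventually_ge_atTop 3] with n hn
    have e : x n - y n i = (z n - y n i) - (z n - x n) := by abel
    rw [e]
    have := norm_sub_le (z n - y n i) (z n - x n)
    have := hzx n hn
    linarith
  refine ⟨hzy, hxy, ?_⟩
  have h1 : Tendsto (fun n => 2 * ‖x n - y n i‖ + ‖y n i - T i (y n i)‖) atTop (𝓝 0) := by
    simpa using (hxy.const_mul 2).add hyT
  refine squeeze_zero (fun n => norm_nonneg _) (fun n => ?_) h1
  have e : T i (x n) - x n = (T i (x n) - T i (y n i)) - (y n i - T i (y n i)) - (x n - y n i) := by abel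
  have h2 := aux_firm_lip (T i) (hT_firm i hi) (x n) (y n i)
  have h3 := norm_sub_le ((T i (x n) - T i (y n i)) - (y n i - T i (y n i))) (x n - y n i)
  have h4 := norm_sub_le (T i (x n) - T i (y n i)) (y n i - T i (y n i))
  rw [e]
  linarith
end

section
/- Let ψ = Σ_{i=1}^M (f_i + h_i) and Ω = {x̂ ∈ S : ψ(x̂) = min_{x∈S} ψ(x)}, assumed nonempty. Every weak sequential cluster point of the sequence {x_n} generated by Algorithm 2 belongs to Ω. -/
open Filter Topology

/-- A continuous convex function on a Hilbert space has a subgradient at every point. -/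
lemma alg2_exists_subgradient {H : Type*} [NormedAddCommGroup H] [InnerProductSpace ℝ H]
    [CompleteSpace H] (f : H → ℝ) (hc : Continuous f) (hf : ConvexOn ℝ Set.univ f) (p : H) :
    ∃ s : H, ∀ v : H, f p + inner ℝ s (v - p) ≤ f v := by
  have hconv : Convex ℝ {q : H × ℝ | q.1 ∈ Set.univ ∧ f q.1 < q.2} := hf.convex_strict_epigraph
  have hopen : IsOpen {q : H × ℝ | q.1 ∈ Set.univ ∧ f q.1 < q.2} := by
    simp only [Set.mem_univ, true_and]
    exact isOpen_lt (hc.comp continuous_fst) continuous_snd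
  obtain ⟨Λ, hΛ⟩ := geometric_hahn_banach_open_point hconv hopen
    (x := (p, f p)) (by simp)
  have hsplit : ∀ (a : H) (t : ℝ), Λ (a, t) = Λ (a, 0) + t * Λ (0, 1) := by
    intro a t
    have : (a, t) = (a, (0:ℝ)) + t • ((0:H), (1:ℝ)) := by simp
    rw [this, map_add, map_smul, smul_eq_mul]
  have hsub : ∀ a : H, Λ (a - p, 0) = Λ (a, 0) - Λ (p, 0) := by
    intro a
    rw [← map_sub]; simp
  set c := Λ (0, 1) with hcdef
  have hcneg : c < 0 := by
    have := hΛ (p, f p + 1) (by simp)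
    rw [hsplit p (f p + 1), hsplit p (f p)] at this
    linarith
  let l : H →L[ℝ] ℝ := Λ.comp (ContinuousLinearMap.inl ℝ H ℝ)
  have hl : ∀ a, l a = Λ (a, 0) := fun a => by simp [l]
  refine ⟨(-c)⁻¹ • (InnerProductSpace.toDual ℝ H).symm l, fun v => ?_⟩
  rw [inner_smul_left, InnerProductSpace.toDual_symm_apply, hl, hsub]
  simp only [conj_trivial]
  by_contra hlt
  push Not at hlt
  have := hΛ (v, f p + (-c)⁻¹ * (Λ (v, 0) - Λ (p, 0))) (by simpa using hlt)
  rw [hsplit v, hsplit p (f p)] at this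
  have e : (-c)⁻¹ * (Λ (v, 0) - Λ (p, 0)) * c = -(Λ (v, 0) - Λ (p, 0)) := by
    have := hcneg.ne
    field_simp
  linarith [add_mul (f p) ((-c)⁻¹ * (Λ (v, 0) - Λ (p, 0))) c]

/-- First-order condition of convexity. -/
lemma alg2_grad_ineq {H : Type*} [NormedAddCommGroup H] [InnerProductSpace ℝ H]
    [CompleteSpace H] (f : H → ℝ) (hf : ConvexOn ℝ Set.univ f) (g p : H)
    (hg : HasGradientAt f g p) (v : H) :
    f p + inner ℝ g (v - p) ≤ f v := by
  have hcont : HasDerivAt (fun t : ℝ => f (p + t • (v - p))) (inner ℝ g (v - p)) 0 := by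
    have h1 : HasFDerivAt f (InnerProductSpace.toDual ℝ H g) (p + (0:ℝ) • (v - p)) := by
      simpa using hg.hasFDerivAt
    have h2 : HasDerivAt (fun t : ℝ => p + t • (v - p)) (v - p) 0 := by
      simpa using ((hasDerivAt_id (0:ℝ)).smul_const (v - p)).const_add p
    have h5 := h1.comp_hasDerivAt (0:ℝ) h2
    rw [InnerProductSpace.toDual_apply_apply] at h5
    exact h5
  have h3 := hcont.tendsto_slope_zero_right
  have h4 : ∀ᶠ t : ℝ in 𝓝[>] 0, t⁻¹ • (f (p + (0 + t) • (v - p)) - f (p + (0:ℝ) • (v - p)))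
      ≤ f v - f p := by
    filter_upwards [Ioo_mem_nhdsGT (zero_lt_one' ℝ)] with t ht
    have := hf.2 (Set.mem_univ p) (Set.mem_univ v) (sub_nonneg.2 ht.2.le) ht.1.le (by ring)
    have e : (1 - t) • p + t • v = p + t • (v - p) := by module
    rw [e] at this
    simp only [zero_add, zero_smul, add_zero, smul_eq_mul] at this ⊢
    rw [inv_mul_le_iff₀ ht.1]
    linarith
  have := le_of_tendsto h3 h4
  linarith

/-- Weak form of the Baillon-Haddad theorem: the forward step is nonexpansive for short steps. -/
lemma alg2_forward_nonexp {H : Type*} [NormedAddCommGroup H] [InnerProductSpace ℝ H]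
    [CompleteSpace H] (h : H → ℝ) (h' : H → H) (L : ℝ) (hL : 0 < L)
    (hh : ConvexOn ℝ Set.univ h) (hg : ∀ x, HasGradientAt h (h' x) x)
    (hlip : ∀ x y : H, ‖h' x - h' y‖ ≤ (1 / L) * ‖x - y‖) (lam : ℝ) (hl0 : 0 ≤ lam)
    (hl : lam ≤ L) (x y : H) :
    ‖(x - y) - lam • (h' x - h' y)‖ ≤ ‖x - y‖ := by
  have gi : ∀ a b : H, h a + inner ℝ (h' a) (b - a) ≤ h b :=
    fun a b => alg2_grad_ineq h hh (h' a) a (hg a) b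
  have key : ∀ a b : H, h a - h b - inner ℝ (h' a) (a - b) ≤ - (L / 4) * ‖h' b - h' a‖ ^ 2 := by
    intro a b
    set g := h' b - h' a with hgdef
    set c := b - (L / 2) • g with hcdef
    have h1 := gi a c
    have h2 := gi c b
    have e1 : inner ℝ (h' a) (c - a) = - inner ℝ (h' a) (a - b) - (L / 2) * inner ℝ (h' a) g := by
      have : c - a = -(a - b) - (L / 2) • g := by rw [hcdef]; module
      rw [this, inner_sub_right, inner_neg_right, inner_smul_right]
    have e2 : inner ℝ (h' c) (b - c) = (L / 2) * (inner ℝ (h' c - h' b) g + inner ℝ g g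
        + inner ℝ (h' a) g) := by
      have : b - c = (L / 2) • g := by rw [hcdef]; module
      rw [this, inner_smul_right, ← inner_add_left, ← inner_add_left]
      congr 2
      rw [hgdef]; abel
    have e3 : - (1 / 2 * ‖g‖ ^ 2) ≤ inner ℝ (h' c - h' b) g := by
      have b1 := neg_le_of_abs_le (abs_real_inner_le_norm (h' c - h' b) g)
      have b2 := hlip c b
      have b3 : ‖c - b‖ = L / 2 * ‖g‖ := by
        have : c - b = -((L / 2) • g) := by rw [hcdef]; module
        rw [this, norm_neg, norm_smul, Real.norm_of_nonneg (by positivity)]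
      rw [b3] at b2
      have b4 : 1 / L * (L / 2 * ‖g‖) = 1 / 2 * ‖g‖ := by field_simp
      rw [b4] at b2
      nlinarith [norm_nonneg g]
    rw [real_inner_self_eq_norm_sq] at e2
    nlinarith [mul_le_mul_of_nonneg_left e3 hL.le]
  have k1 := key x y
  have k2 := key y x
  have e : inner ℝ (h' y) (y - x) = - inner ℝ (h' y) (x - y) := by
    rw [← inner_neg_right, neg_sub]
  have k3 : L / 2 * ‖h' x - h' y‖ ^ 2 ≤ inner ℝ (x - y) (h' x - h' y) := by
    rw [real_inner_comm, inner_sub_left]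
    rw [norm_sub_rev (h' y)] at k1
    linarith
  have : ‖(x - y) - lam • (h' x - h' y)‖ ^ 2 ≤ ‖x - y‖ ^ 2 := by
    rw [norm_sub_sq_real, inner_smul_right, norm_smul, Real.norm_of_nonneg hl0]
    have := mul_le_mul_of_nonneg_left k3 hl0
    nlinarith [mul_nonneg (mul_nonneg hl0 (sub_nonneg.2 hl)) (sq_nonneg ‖h' x - h' y‖)]
  exact (sq_le_sq₀ (norm_nonneg _) (norm_nonneg _)).1 this

/-- Optimality condition of the proximal point. -/
lemma alg2_prox_ineq {H : Type*} [NormedAddCommGroup H] [InnerProductSpace ℝ H]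
    (f : H → ℝ) (hf : ConvexOn ℝ Set.univ f) (lam : ℝ) (hlam : 0 < lam) (c y : H)
    (hy : ∀ v : H, f y + (1 / (2 * lam)) * ‖c - y‖ ^ 2 ≤ f v + (1 / (2 * lam)) * ‖c - v‖ ^ 2)
    (v : H) : inner ℝ (c - y) (v - y) ≤ lam * (f v - f y) := by
  have h1 : ∀ t : ℝ, 0 < t → t < 1 →
      inner ℝ (c - y) (v - y) ≤ lam * (f v - f y) + t * (‖v - y‖ ^ 2 / 2) := by
    intro t ht0 ht1
    have a1 := hy (y + t • (v - y))
    have a2 := hf.2 (Set.mem_univ y) (Set.mem_univ v) (sub_nonneg.2 ht1.le) ht0.le (by ring)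
    have e : (1 - t) • y + t • v = y + t • (v - y) := by module
    rw [e] at a2
    have e2 : c - (y + t • (v - y)) = (c - y) - t • (v - y) := by abel
    rw [e2, norm_sub_sq_real (c - y), inner_smul_right, norm_smul, Real.norm_of_nonneg ht0.le] at a1
    simp only [smul_eq_mul] at a2
    have a3 : 0 ≤ t * (f v - f y) + (1 / (2 * lam)) *
      (t * (- 2 * inner ℝ (c - y) (v - y) + t * ‖v - y‖ ^ 2)) := by nlinarith
    have a4 := mul_nonneg (mul_pos (two_pos) hlam).le a3
    have a5 : 2 * lam * (t * (f v - f y) + (1 / (2 * lam)) *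
      (t * (- 2 * inner ℝ (c - y) (v - y) + t * ‖v - y‖ ^ 2))) =
      t * (2 * (lam * (f v - f y) + t * (‖v - y‖ ^ 2 / 2) - inner ℝ (c - y) (v - y))) := by
      field_simp; ring
    rw [a5] at a4
    have := nonneg_of_mul_nonneg_right a4 ht0
    linarith
  have h2 : Tendsto (fun t : ℝ => lam * (f v - f y) + t * (‖v - y‖ ^ 2 / 2)) (𝓝[>] 0)
      (𝓝 (lam * (f v - f y) + 0 * (‖v - y‖ ^ 2 / 2))) := by
    apply Tendsto.mono_left _ nhdsWithin_le_nhds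
    exact Continuous.tendsto (by fun_prop) 0
  have := ge_of_tendsto h2 (b := inner ℝ (c - y) (v - y)) (by
    filter_upwards [Ioo_mem_nhdsGT (zero_lt_one' ℝ)] with t ht
    exact h1 t ht.1 ht.2)
  simpa using this

/-- Xu's lemma. -/
lemma alg2_xu (s a ε : ℕ → ℝ) (hs : ∀ n, 0 ≤ s n) (ha0 : ∀ n, 0 ≤ a n) (ha1 : ∀ n, a n ≤ 1)
    (hsum : ¬ Summable a) (hε : Tendsto ε atTop (𝓝 0))
    (hrec : ∀ᶠ n in atTop, s (n + 1) ≤ (1 - a n) * s n + a n * ε n) :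
    Tendsto s atTop (𝓝 0) := by
  rw [Metric.tendsto_atTop]
  intro δ hδ
  have hev := hrec.and (hε.eventually (gt_mem_nhds (show (0:ℝ) < δ / 4 by positivity)))
  obtain ⟨N, hN⟩ := eventually_atTop.1 hev
  have hstep : ∀ n ≥ N, s (n + 1) ≤ (1 - a n) * s n + a n * (δ / 4) := fun n hn => by
    have := hN n hn
    nlinarith [ha0 n]
  have hex : ∃ n ≥ N, s n < δ / 2 := by
    by_contra hcon
    push Not at hcon
    apply hsum
    rw [← summable_nat_add_iff N]
    refine summable_of_sum_range_le (c := s N / (δ / 4)) (fun n => ha0 _) (fun n => ?_)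
    rw [le_div_iff₀ (by positivity)]
    have : ∀ n, (∑ i ∈ Finset.range n, a (i + N)) * (δ / 4) ≤ s N - s (n + N) := by
      intro n
      induction n with
      | zero => simp
      | succ k ih =>
        rw [Finset.sum_range_succ, add_mul]
        have h1 := hstep (k + N) (by omega)
        have h2 := hcon (k + N) (by omega)
        have e : k + 1 + N = k + N + 1 := by omega
        rw [e]
        nlinarith [ha0 (k + N)]
    linarith [this n, hs (n + N)]
  obtain ⟨m, hm, hms⟩ := hex
  refine ⟨m, fun n hn => ?_⟩
  have : s n ≤ δ / 2 := by
    induction n, hn using Nat.le_induction with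
    | base => exact hms.le
    | succ k hk ih =>
      have h1 := hstep k (by omega)
      nlinarith [ha0 k, ha1 k]
  rw [Real.dist_eq, sub_zero, abs_of_nonneg (hs n)]
  linarith

lemma alg2_bdd_of_ge {H : Type*} [NormedAddCommGroup H] (a : ℕ → H) (N : ℕ)
    (h : ∃ C, ∀ n ≥ N, ‖a n‖ ≤ C) : ∃ C, 0 ≤ C ∧ ∀ n, ‖a n‖ ≤ C := by
  obtain ⟨C, hC⟩ := h
  have hs : 0 ≤ ∑ i ∈ Finset.range N, ‖a i‖ := Finset.sum_nonneg fun i _ => norm_nonneg _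
  refine ⟨|C| + ∑ i ∈ Finset.range N, ‖a i‖, by positivity, fun n => ?_⟩
  by_cases hn : N ≤ n
  · linarith [hC n hn, le_abs_self C]
  · have := Finset.single_le_sum (f := fun i => ‖a i‖) (fun i _ => norm_nonneg _)
      (Finset.mem_range.2 (not_le.1 hn))
    linarith [abs_nonneg C]

lemma alg2_bdd_rec {H : Type*} [NormedAddCommGroup H] [NormedSpace ℝ H] (d g : ℕ → H) (β : ℕ → ℝ)
    (hβ0 : ∀ n, 0 ≤ β n)
    (hβ : Tendsto β atTop (𝓝 0)) (G : ℝ) (hg : ∀ n, ‖g n‖ ≤ G)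
    (hd : ∀ n ≥ 1, d (n + 1) = - g n + β n • d n) : ∃ C, 0 ≤ C ∧ ∀ n, ‖d n‖ ≤ C := by
  obtain ⟨N, hN⟩ := eventually_atTop.1
    (hβ.eventually (gt_mem_nhds (show (0:ℝ) < 1 / 2 by positivity)))
  apply alg2_bdd_of_ge d (N + 1)
  refine ⟨max (2 * G) ‖d (N + 1)‖, fun n hn => ?_⟩
  induction n, hn using Nat.le_induction with
  | base => exact le_max_right _ _
  | succ k hk ih =>
    rw [hd k (by omega)]
    have h1 := norm_add_le (- g k) (β k • d k)
    rw [norm_neg, norm_smul, Real.norm_of_nonneg (hβ0 k)] at h1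
    have h2 := hN k (by omega)
    have h3 := le_max_left (2 * G) ‖d (N + 1)‖
    have h4 := hg k
    nlinarith [norm_nonneg (d k), hβ0 k]

lemma alg2_unif_bdd {H : Type*} [NormedAddCommGroup H] (s : Finset ℕ) (a : ℕ → ℕ → H)
    (h : ∀ i ∈ s, ∃ C, 0 ≤ C ∧ ∀ n, ‖a i n‖ ≤ C) :
    ∃ C, 0 ≤ C ∧ ∀ i ∈ s, ∀ n, ‖a i n‖ ≤ C := by
  choose! C hC0 hC using h
  refine ⟨∑ i ∈ s, C i, Finset.sum_nonneg hC0, fun i hi n => ?_⟩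
  exact (hC i hi n).trans (Finset.single_le_sum (f := C) hC0 hi)

set_option maxHeartbeats 2000000 in
/-- One-component difference estimate. -/
lemma alg2_core_diff {H : Type*} [NormedAddCommGroup H] [InnerProductSpace ℝ H] [CompleteSpace H]
    (f h : H → ℝ) (h' : H → H) (L : ℝ) (T : H → H)
    (hf : ConvexOn ℝ Set.univ f) (hh : ConvexOn ℝ Set.univ h)
    (hg : ∀ x, HasGradientAt h (h' x) x) (hL : 0 < L)
    (hlip : ∀ x y : H, ‖h' x - h' y‖ ≤ (1 / L) * ‖x - y‖)
    (hT : ∀ x y, ‖T x - T y‖ ≤ ‖x - y‖)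
    (K : ℝ) (hK : 0 ≤ K) (a a' l l' b b' t t' : ℝ)
    (ha' : a' ≤ 1) (ha0 : 0 ≤ a') (hl : 0 < l) (hl' : 0 < l') (hl'L : l' ≤ L) (hb' : 0 ≤ b')
    (hbb : b' ≤ b)
    (ht' : 0 ≤ t') (htt : t' ≤ t)
    (x0 x1 x2 z z' y y' d d1 d2 u w w' : H)
    (hz : z = x1 + t • (x1 - x0)) (hz' : z' = x2 + t' • (x2 - x1))
    (hd1 : d1 = - h' z + b • d) (hd2 : d2 = - h' z' + b' • d1)
    (hy : ∀ v : H, f y + (1 / (2 * l)) * ‖z + l • d1 - y‖ ^ 2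
        ≤ f v + (1 / (2 * l)) * ‖z + l • d1 - v‖ ^ 2)
    (hy' : ∀ v : H, f y' + (1 / (2 * l')) * ‖z' + l' • d2 - y'‖ ^ 2
        ≤ f v + (1 / (2 * l')) * ‖z' + l' • d2 - v‖ ^ 2)
    (hw : w = a • u + (1 - a) • T y) (hw' : w' = a' • u + (1 - a') • T y')
    (kx0 : ‖x0‖ ≤ K) (kx1 : ‖x1‖ ≤ K) (kx2 : ‖x2‖ ≤ K) (kz : ‖z‖ ≤ K) (ky : ‖y‖ ≤ K)
    (kd : ‖d‖ ≤ K) (kd1 : ‖d1‖ ≤ K) (ku : ‖u‖ ≤ K) (kT : ‖T y‖ ≤ K) :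
    ‖w' - w‖ ≤ (1 - a') * ‖x2 - x1‖ +
      4 * K * (|a' - a| + t + l' * b + |1 - l' / l|) := by
  have p1 := alg2_prox_ineq f hf l hl _ y hy y'
  have p2 := alg2_prox_ineq f hf l' hl' _ y' hy' y
  have hr : 0 < l' / l := by positivity
  have p1' := mul_le_mul_of_nonneg_left p1 hr.le
  have e1 : l' / l * (l * (f y' - f y)) = l' * (f y' - f y) := by field_simp
  rw [e1] at p1'
  set r := l' / l with hrdef
  have m1 : ‖y' - y‖ ^ 2 ≤ inner ℝ ((z' - z - l' • (h' z' - h' z))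
      + (l' • (b' • d1 - b • d) + (1 - r) • (z - y))) (y' - y) := by
    have q1 : inner ℝ (r • (z + l • d1 - y)) (y' - y) + inner ℝ (z' + l' • d2 - y') (y - y') ≤ 0 := by
      rw [inner_smul_left]; simp only [conj_trivial]; linarith
    have q2 : y - y' = -(y' - y) := by abel
    rw [q2, inner_neg_right, ← sub_eq_add_neg, ← inner_sub_left] at q1
    have q3 : r • (z + l • d1 - y) - (z' + l' • d2 - y') = (y' - y) - ((z' - z - l' • (h' z' - h' z))
      + (l' • (b' • d1 - b • d) + (1 - r) • (z - y))) := by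
      have rl : r * l = l' := by rw [hrdef]; field_simp
      have : r • (z + l • d1 - y) = r • (z - y) + l' • d1 := by
        rw [← rl]; module
      rw [this, hd2]
      have : l' • d1 = l' • (- h' z + b • d) := by rw [← hd1]
      rw [this]
      module
    rw [q3, inner_sub_left, real_inner_self_eq_norm_sq] at q1
    linarith
  have m2 : ‖y' - y‖ ≤ ‖z' - z‖ + (l' * (2 * K * b) + |1 - r| * (2 * K)) := by
    have c1 := real_inner_le_norm ((z' - z - l' • (h' z' - h' z))
      + (l' • (b' • d1 - b • d) + (1 - r) • (z - y))) (y' - y)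
    have c2 : ‖(z' - z - l' • (h' z' - h' z))
      + (l' • (b' • d1 - b • d) + (1 - r) • (z - y))‖
      ≤ ‖z' - z‖ + (l' * (2 * K * b) + |1 - r| * (2 * K)) := by
      refine (norm_add_le _ _).trans (add_le_add ?_ ((norm_add_le _ _).trans (add_le_add ?_ ?_)))
      · exact alg2_forward_nonexp h h' L hL hh hg hlip l' hl'.le hl'L z' z
      · rw [norm_smul, Real.norm_of_nonneg hl'.le]
        gcongr
        refine (norm_sub_le _ _).trans ?_
        rw [norm_smul, norm_smul, Real.norm_of_nonneg hb', Real.norm_of_nonneg (hb'.trans hbb)]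
        nlinarith [norm_nonneg d, norm_nonneg d1]
      · rw [norm_smul, Real.norm_eq_abs]
        gcongr
        exact (norm_sub_le _ _).trans (by linarith)
    have c3 : ‖y' - y‖ * ‖y' - y‖ ≤ (‖z' - z‖ + (l' * (2 * K * b) + |1 - r| * (2 * K))) * ‖y' - y‖ := by
      nlinarith [norm_nonneg (y' - y)]
    rcases (norm_nonneg (y' - y)).eq_or_lt with h0 | h0
    · rw [← h0]
      have : 0 ≤ b := hb'.trans hbb
      positivity
    · exact le_of_mul_le_mul_right c3 h0
  have m3 : ‖z' - z‖ ≤ ‖x2 - x1‖ + 4 * K * t := by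
    have e : z' - z = (x2 - x1) + (t' • (x2 - x1) - t • (x1 - x0)) := by rw [hz, hz']; abel
    rw [e]
    refine (norm_add_le _ _).trans (add_le_add le_rfl ?_)
    refine (norm_sub_le _ _).trans ?_
    rw [norm_smul, norm_smul, Real.norm_of_nonneg ht', Real.norm_of_nonneg (ht'.trans htt)]
    have c1 : ‖x2 - x1‖ ≤ 2 * K := (norm_sub_le _ _).trans (by linarith)
    have c2 : ‖x1 - x0‖ ≤ 2 * K := (norm_sub_le _ _).trans (by linarith)
    nlinarith [norm_nonneg (x2 - x1), norm_nonneg (x1 - x0)]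
  have e : w' - w = (a' - a) • (u - T y) + (1 - a') • (T y' - T y) := by rw [hw, hw']; module
  rw [e]
  have n1 : ‖(a' - a) • (u - T y)‖ ≤ |a' - a| * (2 * K) := by
    rw [norm_smul, Real.norm_eq_abs]
    gcongr
    exact (norm_sub_le _ _).trans (by linarith)
  have n2 : ‖(1 - a') • (T y' - T y)‖ ≤ (1 - a') * ‖y' - y‖ := by
    rw [norm_smul, Real.norm_of_nonneg (by linarith)]
    exact mul_le_mul_of_nonneg_left (hT _ _) (by linarith)
  have n3 := norm_add_le ((a' - a) • (u - T y)) ((1 - a') • (T y' - T y))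
  have hb : 0 ≤ b := hb'.trans hbb
  have ht : 0 ≤ t := ht'.trans htt
  have E0 : 0 ≤ 4 * K * t + (l' * (2 * K * b) + |1 - r| * (2 * K)) := by positivity
  have n4 : (1 - a') * ‖y' - y‖ ≤ (1 - a') * ‖x2 - x1‖ +
      (4 * K * t + (l' * (2 * K * b) + |1 - r| * (2 * K))) := by
    have := mul_le_mul_of_nonneg_left (m2.trans (add_le_add m3 le_rfl)) (show 0 ≤ 1 - a' by linarith)
    have E00 := mul_nonneg ha0 E0
    linarith
  have E1 : 0 ≤ K * |a' - a| := by positivity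
  have E2 : 0 ≤ K * (l' * b) := by positivity
  have E3 : 0 ≤ K * |1 - r| := by positivity
  linarith

/-- One-component energy estimate. -/
lemma alg2_core_energy {H : Type*} [NormedAddCommGroup H] [InnerProductSpace ℝ H]
    (f : H → ℝ) (T : H → H) (hf : ConvexOn ℝ Set.univ f)
    (hT : ∀ x y : H, ‖T x - T y‖ ^ 2 ≤ inner ℝ (T x - T y) (x - y))
    (a l : ℝ) (ha0 : 0 ≤ a) (ha1 : a ≤ 1) (hl : 0 < l) (z y d u w q : H) (hq : T q = q)
    (hy : ∀ v : H, f y + (1 / (2 * l)) * ‖z + l • d - y‖ ^ 2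
        ≤ f v + (1 / (2 * l)) * ‖z + l • d - v‖ ^ 2)
    (hw : w = a • u + (1 - a) • T y) :
    ‖w - q‖ ^ 2 + (‖z - y‖ ^ 2 + (1 - a) * ‖y - T y‖ ^ 2)
      + 2 * l * (f y - f q - inner ℝ d (y - q)) ≤ ‖z - q‖ ^ 2 + a * ‖u - q‖ ^ 2 := by
  have p := alg2_prox_ineq f hf l hl _ y hy q
  have h1 : ‖z - q‖ ^ 2 = ‖z - y‖ ^ 2 + 2 * inner ℝ (z - y) (y - q) + ‖y - q‖ ^ 2 := by
    rw [← norm_add_sq_real]; congr 2; abel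
  have h2 : inner ℝ (z + l • d - y) (q - y) = - inner ℝ (z - y) (y - q) - l * inner ℝ d (y - q) := by
    have e1 : z + l • d - y = (z - y) + l • d := by abel
    have e2 : q - y = -(y - q) := by abel
    rw [e1, e2, inner_neg_right, inner_add_left, inner_smul_left]; simp only [conj_trivial]; ring
  have h3 : ‖y - q‖ ^ 2 + ‖z - y‖ ^ 2 + 2 * l * (f y - f q - inner ℝ d (y - q)) ≤ ‖z - q‖ ^ 2 := by
    rw [h2] at p; nlinarith
  have h4 : ‖T y - q‖ ^ 2 + ‖y - T y‖ ^ 2 ≤ ‖y - q‖ ^ 2 := by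
    have := hT y q
    rw [hq] at this
    have e : ‖y - q‖ ^ 2 = ‖y - T y‖ ^ 2 + 2 * inner ℝ (y - T y) (T y - q) + ‖T y - q‖ ^ 2 := by
      rw [← norm_add_sq_real]; congr 2; abel
    have e2 : inner ℝ (T y - q) (y - q) = inner ℝ (y - T y) (T y - q) + ‖T y - q‖ ^ 2 := by
      rw [← real_inner_self_eq_norm_sq, ← inner_add_left, real_inner_comm]; congr 1; abel
    nlinarith
  have h5 : ‖w - q‖ ^ 2 ≤ a * ‖u - q‖ ^ 2 + (1 - a) * ‖T y - q‖ ^ 2 := by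
    have e : w - q = a • (u - q) + (1 - a) • (T y - q) := by rw [hw]; module
    have c : ‖w - q‖ ≤ a * ‖u - q‖ + (1 - a) * ‖T y - q‖ := by
      rw [e]
      refine (norm_add_le _ _).trans (le_of_eq ?_)
      rw [norm_smul, norm_smul, Real.norm_of_nonneg ha0, Real.norm_of_nonneg (by linarith)]
    have c2 := pow_le_pow_left₀ (norm_nonneg _) c 2
    nlinarith [mul_nonneg (mul_nonneg ha0 (sub_nonneg.2 ha1)) (sq_nonneg (‖u - q‖ - ‖T y - q‖))]
  nlinarith [mul_nonneg ha0 (sq_nonneg ‖y - q‖), mul_le_mul_of_nonneg_left h4 (sub_nonneg.2 ha1)]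

/-- Demiclosedness for firmly nonexpansive maps. -/
lemma alg2_demiclosed {H : Type*} [NormedAddCommGroup H] [InnerProductSpace ℝ H]
    (T : H → H) (hT : ∀ x y : H, ‖T x - T y‖ ^ 2 ≤ inner ℝ (T x - T y) (x - y))
    (hTn : ∀ x y : H, ‖T x - T y‖ ≤ ‖x - y‖)
    (y : ℕ → H) (p : H) (K : ℝ) (hK : ∀ n, ‖y n‖ ≤ K)
    (hw : ∀ q : H, Tendsto (fun k => inner ℝ (y k) q) atTop (𝓝 (inner ℝ p q)))
    (hr : Tendsto (fun k => ‖y k - T (y k)‖) atTop (𝓝 0)) : T p = p := by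
  have h1 : ∀ k, 0 ≤ (K + ‖p‖) * ‖y k - T (y k)‖ - inner ℝ (y k) (p - T p)
      + ‖y k - T (y k)‖ * ‖p - T p‖ + inner ℝ (T p) (p - T p) := by
    intro k
    have a1 := hT (y k) p
    set r := y k - T (y k) with hrd
    have a2 : inner ℝ (T (y k) - T p) (y k - p) = ‖T (y k) - T p‖ ^ 2
        + inner ℝ (T (y k) - T p) r - inner ℝ (T (y k) - T p) (p - T p) := by
      rw [← real_inner_self_eq_norm_sq, ← inner_add_right, ← inner_sub_right]; congr 1
      rw [hrd]; abel
    have a3 : inner ℝ (T (y k) - T p) (p - T p) = inner ℝ (y k) (p - T p) - inner ℝ r (p - T p)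
        - inner ℝ (T p) (p - T p) := by
      rw [← inner_sub_left, ← inner_sub_left]; congr 1
      rw [hrd]; abel
    have a4 := real_inner_le_norm (T (y k) - T p) r
    have a5 := real_inner_le_norm r (p - T p)
    have a6 : ‖T (y k) - T p‖ ≤ K + ‖p‖ :=
      (hTn _ _).trans ((norm_sub_le _ _).trans (add_le_add (hK k) le_rfl))
    nlinarith [norm_nonneg r]
  have h2 := ge_of_tendsto' ((((hr.const_mul (K + ‖p‖)).sub (hw (p - T p))).add
    (hr.mul_const ‖p - T p‖)).add_const (inner ℝ (T p) (p - T p))) h1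
  have h3 : inner ℝ p (p - T p) - inner ℝ (T p) (p - T p) = ‖p - T p‖ ^ 2 := by
    rw [← inner_sub_left, real_inner_self_eq_norm_sq]
  have h4 : ‖p - T p‖ ^ 2 ≤ 0 := by linarith
  have h5 : ‖p - T p‖ = 0 := by nlinarith [norm_nonneg (p - T p)]
  exact (sub_eq_zero.1 (norm_eq_zero.1 h5)).symm

lemma alg2_weak_add {H : Type*} [NormedAddCommGroup H] [InnerProductSpace ℝ H]
    (x y : ℕ → H) (p : H)
    (hw : ∀ q : H, Tendsto (fun k => inner ℝ (x k) q) atTop (𝓝 (inner ℝ p q)))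
    (hr : Tendsto (fun k => ‖y k - x k‖) atTop (𝓝 0)) (q : H) :
    Tendsto (fun k => inner ℝ (y k) q) atTop (𝓝 (inner ℝ p q)) := by
  have h1 : Tendsto (fun k => y k - x k) atTop (𝓝 0) := tendsto_zero_iff_norm_tendsto_zero.2 hr
  have h2 : Tendsto (fun k => inner ℝ (y k - x k) q) atTop (𝓝 (inner ℝ (0:H) q)) :=
    h1.inner tendsto_const_nhds
  have := (hw q).add h2
  simp only [inner_zero_left, add_zero] at this
  refine this.congr fun k => ?_
  rw [← inner_add_left]; congr 1; abel

lemma alg2_scalar (a a' l l' t b A A1 K : ℝ) (ha' : 0 < a') (ha1 : a' ≤ 1) (hl : 0 < l)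
    (hl' : 0 < l') (hA0 : 0 ≤ A) (hA : A ≤ 2 * K)
    (h : A1 ≤ (1 - a') * A + 4 * K * (|a' - a| + t + l' * b + |1 - l' / l|)) :
    A1 / l' ≤ (1 - a') * (A / l) + a' * (6 * K * ((1 / a') * |1 / l' - 1 / l|)
      + 4 * K * ((1 / l') * |1 - a / a'| + t / (a' * l') + b / a')) := by
  have e1 : |1 - a / a'| = |a' - a| / a' := by
    rw [← abs_of_pos ha', ← abs_div, abs_of_pos ha']; congr 1; field_simp
  have e2 : |1 - l' / l| = l' * |1 / l' - 1 / l| := by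
    nth_rewrite 2 [← abs_of_pos hl']
    rw [← abs_mul]; congr 1; field_simp
  rw [e2] at h
  rw [e1]
  have h2 := div_le_div_of_nonneg_right h hl'.le
  refine h2.trans ?_
  have e3 : ((1 - a') * A + 4 * K * (|a' - a| + t + l' * b + l' * |1 / l' - 1 / l|)) / l'
      = (1 - a') * (A / l) + (1 - a') * A * (1 / l' - 1 / l)
        + 4 * K * (|a' - a| / l' + t / l' + b + |1 / l' - 1 / l|) := by
    field_simp; ring
  have e4 : a' * (6 * K * ((1 / a') * |1 / l' - 1 / l|)
      + 4 * K * ((1 / l') * (|a' - a| / a') + t / (a' * l') + b / a'))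
      = 6 * K * |1 / l' - 1 / l| + 4 * K * (|a' - a| / l' + t / l' + b) := by
    field_simp
  rw [e3, e4]
  have e5 : (1 - a') * A * (1 / l' - 1 / l) ≤ 2 * K * |1 / l' - 1 / l| := by
    have c1 : (1 - a') * A ≤ 2 * K := by nlinarith
    have c0 : 0 ≤ (1 - a') * A := mul_nonneg (by linarith) hA0
    calc _ ≤ (1 - a') * A * |1 / l' - 1 / l| := mul_le_mul_of_nonneg_left (le_abs_self _) c0
      _ ≤ _ := mul_le_mul_of_nonneg_right c1 (abs_nonneg _)
  linarith

lemma alg2_mean_norm_le {H : Type*} [NormedAddCommGroup H] [NormedSpace ℝ H] (M : ℕ) (hM : 1 ≤ M)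
    (v : ℕ → H) (C : ℝ) (hv : ∀ i ∈ Finset.Icc 1 M, ‖v i‖ ≤ C) :
    ‖(M : ℝ)⁻¹ • ∑ i ∈ Finset.Icc 1 M, v i‖ ≤ C := by
  have hMp : (0:ℝ) < M := by exact_mod_cast hM
  rw [norm_smul, Real.norm_of_nonneg (by positivity), inv_mul_le_iff₀ hMp]
  refine (norm_sum_le_of_le _ hv).trans ?_
  simp

lemma alg2_mean_sq_le {H : Type*} [NormedAddCommGroup H] [NormedSpace ℝ H] (M : ℕ) (hM : 1 ≤ M)
    (v : ℕ → H) (q : H) :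
    M * ‖(M : ℝ)⁻¹ • ∑ i ∈ Finset.Icc 1 M, v i - q‖ ^ 2 ≤ ∑ i ∈ Finset.Icc 1 M, ‖v i - q‖ ^ 2 := by
  have hMp : (0:ℝ) < M := by exact_mod_cast hM
  have e : (M : ℝ)⁻¹ • ∑ i ∈ Finset.Icc 1 M, v i - q
      = (M : ℝ)⁻¹ • ∑ i ∈ Finset.Icc 1 M, (v i - q) := by
    rw [Finset.sum_sub_distrib, smul_sub]
    simp only [Finset.sum_const, Nat.card_Icc, add_tsub_cancel_right]
    rw [← Nat.cast_smul_eq_nsmul ℝ, smul_smul, inv_mul_cancel₀ hMp.ne', one_smul]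
  rw [e, norm_smul, Real.norm_of_nonneg (by positivity)]
  have h1 := pow_le_pow_left₀ (norm_nonneg _)
    (norm_sum_le (Finset.Icc 1 M) (fun i => v i - q)) 2
  have h2 := sq_sum_le_card_mul_sum_sq (s := Finset.Icc 1 M) (f := fun i => ‖v i - q‖)
  simp only [Nat.card_Icc, add_tsub_cancel_right] at h2
  have h3 := h1.trans h2
  have e2 : (M:ℝ) * ((M : ℝ)⁻¹ * ‖∑ i ∈ Finset.Icc 1 M, (v i - q)‖) ^ 2
      = (M : ℝ)⁻¹ * ‖∑ i ∈ Finset.Icc 1 M, (v i - q)‖ ^ 2 := by field_simp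
  rw [e2, inv_mul_le_iff₀ hMp]
  exact h3

set_option maxHeartbeats 4000000 in
theorem alg2_weak_cluster_points_in_Omega
    {H : Type*} [NormedAddCommGroup H] [InnerProductSpace ℝ H] [CompleteSpace H]
    (M : ℕ) (hM : 1 ≤ M)
    (f h : ℕ → H → ℝ) (h' : ℕ → H → H) (L : ℕ → ℝ) (T : ℕ → H → H)
    (hf_cont : ∀ i ∈ Finset.Icc 1 M, Continuous (f i))
    (hf_conv : ∀ i ∈ Finset.Icc 1 M, ConvexOn ℝ Set.univ (f i))
    (hh_conv : ∀ i ∈ Finset.Icc 1 M, ConvexOn ℝ Set.univ (h i))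
    (hh_grad : ∀ i ∈ Finset.Icc 1 M, ∀ x : H, HasGradientAt (h i) (h' i x) x)
    (hL_pos : ∀ i ∈ Finset.Icc 1 M, 0 < L i)
    (hh_lip : ∀ i ∈ Finset.Icc 1 M, ∀ x y : H, ‖h' i x - h' i y‖ ≤ (1 / L i) * ‖x - y‖)
    (hT_firm : ∀ i ∈ Finset.Icc 1 M, ∀ x y : H,
      ‖T i x - T i y‖ ^ 2 ≤ @inner ℝ H _ (T i x - T i y) (x - y))
    (S : Set H) (hS : S = ⋂ i ∈ Finset.Icc 1 M, {x : H | T i x = x}) (hS_ne : S.Nonempty)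
    (θ lam β α : ℕ → ℝ) (σ : ℝ) (hσ : 1 ≤ σ)
    (hθ_range : ∀ n, 0 ≤ θ n ∧ θ n < 1)
    (hlam_pos : ∀ n, 0 < lam n)
    (hlam_le : ∀ n, ∀ i ∈ Finset.Icc 1 M, lam n ≤ 2 * L i)
    (hβ_range : ∀ n, 0 < β n ∧ β n ≤ 1)
    (hα_range : ∀ n, 0 < α n ∧ α n ≤ 1)
    (hθ_anti : Antitone θ) (hlam_anti : Antitone lam)
    (hβ_anti : Antitone β) (hα_anti : Antitone α)
    (hθ_lim : Tendsto θ atTop (𝓝 0)) (hlam_lim : Tendsto lam atTop (𝓝 0))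
    (hβ_lim : Tendsto β atTop (𝓝 0)) (hα_lim : Tendsto α atTop (𝓝 0))
    (hC1 : ¬ Summable α)
    (hC2 : Tendsto (fun n => (1 / α (n+1)) * |1 / lam (n+1) - 1 / lam n|) atTop (𝓝 0))
    (hC3 : Tendsto (fun n => (1 / lam (n+1)) * |1 - α n / α (n+1)|) atTop (𝓝 0))
    (hC4 : Tendsto (fun n => α n / lam n) atTop (𝓝 0))
    (hC5 : Tendsto (fun n => θ n / (α (n+1) * lam (n+1))) atTop (𝓝 0))
    (hC6 : ∀ n, lam n / lam (n+1) ≤ σ)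
    (hC7 : Tendsto (fun n => β n / α (n+1)) atTop (𝓝 0))
    (x z : ℕ → H) (w y d : ℕ → ℕ → H) (u : ℕ → H)
    (hd1 : ∀ i ∈ Finset.Icc 1 M, d 1 i = -(h' i (z 0)))
    (hz : ∀ n ≥ 1, z n = x n + θ n • (x n - x (n-1)))
    (hd : ∀ n ≥ 1, ∀ i ∈ Finset.Icc 1 M, d (n+1) i = -(h' i (z n)) + β n • d n i)
    (hy : ∀ n ≥ 1, ∀ i ∈ Finset.Icc 1 M, ∀ v : H,
      f i (y n i) + (1 / (2 * lam n)) * ‖z n + lam n • d (n+1) i - y n i‖ ^ 2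
        ≤ f i v + (1 / (2 * lam n)) * ‖z n + lam n • d (n+1) i - v‖ ^ 2)
    (hw : ∀ n ≥ 1, ∀ i ∈ Finset.Icc 1 M,
      w n (i+1) = α n • u i + (1 - α n) • T i (y n i))
    (hx : ∀ n ≥ 1, x (n+1) = (M : ℝ)⁻¹ • ∑ i ∈ Finset.Icc 1 M, w n (i+1))
    (hy_bdd : ∀ i ∈ Finset.Icc 1 M, ∃ C, ∀ n ≥ 1, ‖y n i‖ ≤ C)
    (ψ : H → ℝ) (hψ : ∀ v : H, ψ v = ∑ i ∈ Finset.Icc 1 M, (f i v + h i v))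
    (hΩ_ne : ∃ p ∈ S, ∀ v ∈ S, ψ p ≤ ψ v)
    : ∀ p : H,
      (∃ φ : ℕ → ℕ, StrictMono φ ∧
        ∀ q : H, Tendsto (fun k => @inner ℝ H _ (x (φ k)) q) atTop (𝓝 (@inner ℝ H _ p q))) →
      p ∈ S ∧ ∀ v ∈ S, ψ p ≤ ψ v := by
  rintro p ⟨φ, hφ, hweak⟩
  have hMp : (0:ℝ) < M := by exact_mod_cast hM
  have hTn : ∀ i ∈ Finset.Icc 1 M, ∀ a b : H, ‖T i a - T i b‖ ≤ ‖a - b‖ := by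
    intro i hi a b
    have h1 := (hT_firm i hi a b).trans (real_inner_le_norm _ _)
    rcases (norm_nonneg (T i a - T i b)).eq_or_lt with h0 | h0
    · rw [← h0]; exact norm_nonneg _
    · rw [sq] at h1
      exact le_of_mul_le_mul_left h1 h0
  -- uniform bounds
  obtain ⟨Ky, Ky0, hKy⟩ := alg2_unif_bdd (Finset.Icc 1 M) (fun i n => y n i)
    (fun i hi => alg2_bdd_of_ge (fun n => y n i) 1 (hy_bdd i hi))
  obtain ⟨KT, KT0, hKT⟩ := alg2_unif_bdd (Finset.Icc 1 M) (fun i n => T i (y n i))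
    (fun i hi => ⟨Ky + ‖T i 0‖, by positivity, fun n => by
      have h1 := hTn i hi (y n i) 0
      have h2 := norm_le_norm_sub_add (T i (y n i)) (T i 0)
      have h3 := hKy i hi n
      simp only [sub_zero] at h1 h3
      linarith⟩)
  obtain ⟨Ku, Ku0, hKu⟩ := alg2_unif_bdd (Finset.Icc 1 M) (fun i _ => u i)
    (fun i hi => ⟨‖u i‖, norm_nonneg _, fun n => le_rfl⟩)
  obtain ⟨Kx, Kx0, hKx⟩ := alg2_bdd_of_ge x 2 ⟨Ku + KT, fun n hn => by
    obtain ⟨m, rfl⟩ : ∃ m, n = m + 1 := ⟨n - 1, by omega⟩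
    rw [hx m (by omega)]
    refine alg2_mean_norm_le M hM _ _ (fun i hi => ?_)
    rw [hw m (by omega) i hi]
    refine (norm_add_le _ _).trans ?_
    obtain ⟨a0, a1⟩ := hα_range m
    rw [norm_smul, norm_smul, Real.norm_of_nonneg a0.le, Real.norm_of_nonneg (by linarith)]
    have h1 := hKu i hi 0
    have h2 := hKT i hi m
    nlinarith [norm_nonneg (u i), norm_nonneg (T i (y m i))]⟩
  obtain ⟨Kz, Kz0, hKz⟩ := alg2_bdd_of_ge z 1 ⟨3 * Kx, fun n hn => by
    rw [hz n hn]
    refine (norm_add_le _ _).trans ?_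
    obtain ⟨t0, t1⟩ := hθ_range n
    rw [norm_smul, Real.norm_of_nonneg t0]
    have h1 := norm_sub_le (x n) (x (n - 1))
    have h2 := hKx n
    have h3 := hKx (n - 1)
    nlinarith [norm_nonneg (x n - x (n - 1))]⟩
  obtain ⟨Kg, Kg0, hKg⟩ := alg2_unif_bdd (Finset.Icc 1 M) (fun i n => h' i (z n))
    (fun i hi => ⟨‖h' i 0‖ + 1 / L i * Kz, by have := hL_pos i hi; positivity, fun n => by
      have h1 := hh_lip i hi (z n) 0
      have h2 := norm_le_norm_sub_add (h' i (z n)) (h' i 0)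
      have h3 := mul_le_mul_of_nonneg_left (hKz n) (show 0 ≤ 1 / L i by have := hL_pos i hi; positivity)
      simp only [sub_zero] at h1
      linarith⟩)
  obtain ⟨Kd, Kd0, hKd⟩ := alg2_unif_bdd (Finset.Icc 1 M) (fun i n => d n i)
    (fun i hi => alg2_bdd_rec (fun n => d n i) (fun n => h' i (z n)) β (fun n => (hβ_range n).1.le)
      hβ_lim Kg (hKg i hi) (fun n hn => hd n hn i hi))
  obtain ⟨K, hK0, kx, kz, ky, kT, ku, kg, kd⟩ : ∃ K : ℝ, 0 ≤ K ∧ (∀ n, ‖x n‖ ≤ K) ∧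
      (∀ n, ‖z n‖ ≤ K) ∧
      (∀ i ∈ Finset.Icc 1 M, ∀ n, ‖y n i‖ ≤ K) ∧ (∀ i ∈ Finset.Icc 1 M, ∀ n, ‖T i (y n i)‖ ≤ K) ∧
      (∀ i ∈ Finset.Icc 1 M, ‖u i‖ ≤ K) ∧ (∀ i ∈ Finset.Icc 1 M, ∀ n, ‖h' i (z n)‖ ≤ K) ∧
      (∀ i ∈ Finset.Icc 1 M, ∀ n, ‖d n i‖ ≤ K) := by
    refine ⟨Kx + Kz + Ky + KT + Ku + Kg + Kd, by positivity, fun n => ?_, fun n => ?_,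
      fun i hi n => ?_, fun i hi n => ?_, fun i hi => ?_, fun i hi n => ?_, fun i hi n => ?_⟩
    · linarith [hKx n]
    · linarith [hKz n]
    · linarith [hKy i hi n]
    · linarith [hKT i hi n]
    · linarith [hKu i hi 0]
    · linarith [hKg i hi n]
    · linarith [hKd i hi n]
  clear hKx hKz hKy hKT hKu hKg hKd
  have kxx : ∀ m n, ‖x m - x n‖ ≤ 2 * K := fun m n =>
    (norm_sub_le _ _).trans (by linarith [kx m, kx n])
  -- asymptotic regularity
  have hreg : Tendsto (fun n => ‖x (n + 1) - x n‖ / lam n) atTop (𝓝 0) := by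
    have hε := (hC2.const_mul (6 * K)).add (((hC3.add hC5).add hC7).const_mul (4 * K))
    simp only [add_zero, mul_zero] at hε
    refine alg2_xu _ (fun n => α (n + 1)) _
      (fun n => div_nonneg (norm_nonneg _) (hlam_pos n).le) (fun n => (hα_range _).1.le)
      (fun n => (hα_range _).2) (fun hs => hC1 ((summable_nat_add_iff 1).1 hs)) hε ?_
    have hev : ∀ᶠ n in atTop, ∀ i ∈ Finset.Icc 1 M, lam (n + 1) ≤ L i := by
      rw [Filter.eventually_all_finset]
      intro i hi
      have := ((tendsto_add_atTop_iff_nat 1).2 hlam_lim).eventually (gt_mem_nhds (hL_pos i hi))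
      exact this.mono fun n hn => hn.le
    filter_upwards [hev, eventually_ge_atTop 1] with n hn hn1
    refine alg2_scalar (α n) (α (n + 1)) (lam n) (lam (n + 1)) (θ n) (β n) _ _ K (hα_range _).1
      (hα_range _).2 (hlam_pos _) (hlam_pos _) (norm_nonneg _) (kxx _ _) ?_
    rw [hx (n + 1) (by omega), hx n hn1, ← smul_sub, ← Finset.sum_sub_distrib, ← hx n hn1]
    refine alg2_mean_norm_le M hM _ _ (fun i hi => ?_)
    exact alg2_core_diff (f i) (h i) (h' i) (L i) (T i) (hf_conv i hi) (hh_conv i hi)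
      (hh_grad i hi) (hL_pos i hi) (hh_lip i hi) (hTn i hi) K hK0 (α n) (α (n + 1)) (lam n)
      (lam (n + 1)) (β n) (β (n + 1)) (θ n) (θ (n + 1)) (hα_range _).2 (hα_range _).1.le
      (hlam_pos _) (hlam_pos _) (hn i hi) (hβ_range _).1.le (hβ_anti (Nat.le_succ n))
      (hθ_range _).1 (hθ_anti (Nat.le_succ n)) (x (n - 1)) (x n) (x (n + 1)) (z n) (z (n + 1))
      (y n i) (y (n + 1) i) (d n i) (d (n + 1) i) (d (n + 1 + 1) i) (u i) _ _
      (hz n hn1) (hz (n + 1) (by omega)) (hd n hn1 i hi) (hd (n + 1) (by omega) i hi)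
      (hy n hn1 i hi) (hy (n + 1) (by omega) i hi) (hw n hn1 i hi) (hw (n + 1) (by omega) i hi)
      (kx _) (kx _) (kx _) (kz _) (ky i hi _) (kd i hi _) (kd i hi _) (ku i hi) (kT i hi _)
  have hθlam : Tendsto (fun n => θ n / lam n) atTop (𝓝 0) := by
    refine squeeze_zero (fun n => div_nonneg (hθ_range n).1 (hlam_pos n).le) (fun n => ?_) hC5
    have h1 := hα_range (n + 1)
    have h2 := hlam_anti (Nat.le_succ n)
    have h3 := hlam_pos (n + 1)
    exact div_le_div_of_nonneg_left (hθ_range n).1 (mul_pos h1.1 h3)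
      (by simp only [Nat.succ_eq_add_one] at h2; nlinarith)
  have hSmem : ∀ q, q ∈ S ↔ ∀ i ∈ Finset.Icc 1 M, T i q = q := by
    intro q; rw [hS]; simp
  -- energy estimate
  have henergy : ∀ q ∈ S, ∃ ρ : ℕ → ℝ, Tendsto ρ atTop (𝓝 0) ∧ ∀ n ≥ 1,
      ∑ i ∈ Finset.Icc 1 M, ((‖z n - y n i‖ ^ 2 + (1 - α n) * ‖y n i - T i (y n i)‖ ^ 2)
        + 2 * lam n * (f i (y n i) - f i q - inner ℝ (d (n + 1) i) (y n i - q)))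
      ≤ lam n * ρ n := by
    intro q hq
    set Q := ‖q‖ with hQ
    have hQ0 : 0 ≤ Q := norm_nonneg q
    set B := (K + Q) ^ 2 + 4 * K * (K + Q) + 4 * K ^ 2 with hB
    have hlim := ((hreg.const_mul (2 * (K + Q))).add ((hC4.add hθlam).const_mul B)).const_mul (M : ℝ)
    simp only [add_zero, mul_zero] at hlim
    refine ⟨_, hlim, fun n hn => ?_⟩
    obtain ⟨t0, t1⟩ := hθ_range n
    obtain ⟨a0, a1⟩ := hα_range n
    have hl := hlam_pos n
    have kq : ∀ v : H, ‖v‖ ≤ K → ‖v - q‖ ≤ K + Q := fun v hv =>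
      (norm_sub_le _ _).trans (by linarith)
    have s1 : ‖z n - q‖ ^ 2 ≤ ‖x n - q‖ ^ 2 + θ n * (4 * K * (K + Q) + 4 * K ^ 2) := by
      have e : z n - q = (x n - q) + θ n • (x n - x (n - 1)) := by rw [hz n hn]; abel
      rw [e, norm_add_sq_real, inner_smul_right, norm_smul, Real.norm_of_nonneg t0]
      have c1 := real_inner_le_norm (x n - q) (x n - x (n - 1))
      have c2 : ‖x n - q‖ * ‖x n - x (n - 1)‖ ≤ (K + Q) * (2 * K) :=
        mul_le_mul (kq _ (kx n)) (kxx _ _) (norm_nonneg _) (by positivity)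
      have c3 := mul_le_mul_of_nonneg_left (c1.trans c2) t0
      have c4 := pow_le_pow_left₀ (norm_nonneg _) (kxx n (n - 1)) 2
      have c5 : θ n ^ 2 ≤ θ n := by nlinarith
      have c6 := mul_le_mul c5 c4 (by positivity) t0
      nlinarith
    have s2 : ∀ i ∈ Finset.Icc 1 M, ((‖z n - y n i‖ ^ 2 + (1 - α n) * ‖y n i - T i (y n i)‖ ^ 2)
        + 2 * lam n * (f i (y n i) - f i q - inner ℝ (d (n + 1) i) (y n i - q)))
        ≤ (‖x n - q‖ ^ 2 + B * (α n + θ n)) - ‖w n (i + 1) - q‖ ^ 2 := by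
      intro i hi
      have c1 := alg2_core_energy (f i) (T i) (hf_conv i hi) (hT_firm i hi) (α n) (lam n) a0.le a1 hl
        (z n) (y n i) (d (n + 1) i) (u i) (w n (i + 1)) q ((hSmem q).1 hq i hi) (hy n hn i hi)
        (hw n hn i hi)
      have c2 := pow_le_pow_left₀ (norm_nonneg _) (kq _ (ku i hi)) 2
      have c3 := mul_le_mul_of_nonneg_left c2 a0.le
      have c4 : 0 ≤ α n * (4 * K * (K + Q) + 4 * K ^ 2) := by positivity
      have c5 : 0 ≤ θ n * (K + Q) ^ 2 := by positivity
      rw [hB]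
      linarith
    refine (Finset.sum_le_sum s2).trans ?_
    rw [Finset.sum_sub_distrib]
    simp only [Finset.sum_const, Nat.card_Icc, add_tsub_cancel_right, nsmul_eq_mul]
    have s3 := alg2_mean_sq_le M hM (fun i => w n (i + 1)) q
    rw [← hx n hn] at s3
    have s4 : ‖x n - q‖ ^ 2 - ‖x (n + 1) - q‖ ^ 2 ≤ 2 * (K + Q) * ‖x (n + 1) - x n‖ := by
      have c1 := norm_sub_norm_le (x n - q) (x (n + 1) - q)
      have c2 : x n - q - (x (n + 1) - q) = -(x (n + 1) - x n) := by abel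
      rw [c2, norm_neg] at c1
      have c3 := kq _ (kx n)
      have c4 := kq _ (kx (n + 1))
      have c5 := norm_nonneg (x n - q)
      have c6 := norm_nonneg (x (n + 1) - q)
      have c7 := norm_nonneg (x (n + 1) - x n)
      nlinarith [mul_le_mul_of_nonneg_right c1 (add_nonneg c5 c6)]
    have s5 : lam n * (M * (2 * (K + Q) * (‖x (n + 1) - x n‖ / lam n)
        + B * (α n / lam n + θ n / lam n)))
        = M * (2 * (K + Q) * ‖x (n + 1) - x n‖ + B * (α n + θ n)) := by
      field_simp
    rw [s5]
    have s6 := mul_le_mul_of_nonneg_left s4 hMp.le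
    linarith
  choose! sg hsg using fun i (hi : i ∈ Finset.Icc 1 M) =>
    alg2_exists_subgradient (f i) (hf_cont i hi) (hf_conv i hi)
  -- residuals vanish
  have hres : ∀ i ∈ Finset.Icc 1 M, Tendsto (fun n => ‖y n i - z n‖) atTop (𝓝 0) ∧
      Tendsto (fun n => ‖y n i - T i (y n i)‖) atTop (𝓝 0) := by
    obtain ⟨q, hq⟩ := hS_ne
    obtain ⟨ρ, hρ, hρn⟩ := henergy q hq
    set R := ∑ i ∈ Finset.Icc 1 M, (‖sg i q‖ + K) * (K + ‖q‖) with hR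
    have hD : ∀ n ≥ 1, ∀ i ∈ Finset.Icc 1 M,
        ‖z n - y n i‖ ^ 2 + (1 - α n) * ‖y n i - T i (y n i)‖ ^ 2 ≤ lam n * (ρ n + 2 * R) := by
      intro n hn i hi
      have h1 := hρn n hn
      rw [Finset.sum_add_distrib, ← Finset.mul_sum] at h1
      have h2 : -R ≤ ∑ i ∈ Finset.Icc 1 M,
          (f i (y n i) - f i q - inner ℝ (d (n + 1) i) (y n i - q)) := by
        rw [hR, ← Finset.sum_neg_distrib]
        refine Finset.sum_le_sum fun j hj => ?_
        have c1 := hsg j hj q (y n j)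
        have c2 := neg_le_of_abs_le (abs_real_inner_le_norm (sg j q) (y n j - q))
        have c3 := real_inner_le_norm (d (n + 1) j) (y n j - q)
        have c4 : ‖y n j - q‖ ≤ K + ‖q‖ := (norm_sub_le _ _).trans (by linarith [ky j hj n])
        have c5 := kd j hj (n + 1)
        have c6 := mul_le_mul_of_nonneg_left c4 (norm_nonneg (sg j q))
        have c7 := mul_le_mul c5 c4 (norm_nonneg _) hK0
        linarith
      have h3 := Finset.single_le_sum
        (f := fun i => ‖z n - y n i‖ ^ 2 + (1 - α n) * ‖y n i - T i (y n i)‖ ^ 2)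
        (fun j _ => add_nonneg (sq_nonneg _) (mul_nonneg (sub_nonneg.2 (hα_range n).2)
          (sq_nonneg _))) hi
      have h4 := mul_le_mul_of_nonneg_left h2 (show 0 ≤ 2 * lam n by linarith [hlam_pos n])
      linarith
    have hlim : Tendsto (fun n => lam n * (ρ n + 2 * R)) atTop (𝓝 0) := by
      simpa using hlam_lim.mul (hρ.add_const (2 * R))
    intro i hi
    have sqz : ∀ g : ℕ → ℝ, (∀ n, 0 ≤ g n) → Tendsto (fun n => g n ^ 2) atTop (𝓝 0) →
        Tendsto g atTop (𝓝 0) := by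
      intro g hg hg2
      have := hg2.sqrt
      simp only [Real.sqrt_zero] at this
      exact this.congr fun n => Real.sqrt_sq (hg n)
    constructor
    · refine sqz _ (fun n => norm_nonneg _) ?_
      refine squeeze_zero' (Eventually.of_forall fun n => sq_nonneg _) ?_ hlim
      filter_upwards [eventually_ge_atTop 1] with n hn
      have := hD n hn i hi
      have h2 := mul_nonneg (sub_nonneg.2 (hα_range n).2) (sq_nonneg ‖y n i - T i (y n i)‖)
      rw [norm_sub_rev]
      linarith
    · refine sqz _ (fun n => norm_nonneg _) ?_
      have hlim2 := hlim.const_mul 2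
      simp only [mul_zero] at hlim2
      refine squeeze_zero' (Eventually.of_forall fun n => sq_nonneg _) ?_ hlim2
      filter_upwards [eventually_ge_atTop 1,
        hα_lim.eventually (gt_mem_nhds (show (0:ℝ) < 1 / 2 by norm_num))] with n hn hn2
      have := hD n hn i hi
      nlinarith [sq_nonneg ‖y n i - T i (y n i)‖, sq_nonneg ‖z n - y n i‖]
  have hzx : Tendsto (fun n => ‖z n - x n‖) atTop (𝓝 0) := by
    have hlim := hθ_lim.mul_const (2 * K)
    simp only [zero_mul] at hlim
    refine squeeze_zero' (Eventually.of_forall fun n => norm_nonneg _) ?_ hlim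
    filter_upwards [eventually_ge_atTop 1] with n hn
    rw [hz n hn, add_sub_cancel_left, norm_smul, Real.norm_of_nonneg (hθ_range n).1]
    exact mul_le_mul_of_nonneg_left (kxx _ _) (hθ_range n).1
  have hφt := hφ.tendsto_atTop
  have wz := alg2_weak_add (fun k => x (φ k)) (fun k => z (φ k)) p hweak (hzx.comp hφt)
  have wy : ∀ i ∈ Finset.Icc 1 M, ∀ q : H,
      Tendsto (fun k => inner ℝ (y (φ k) i) q) atTop (𝓝 (inner ℝ p q)) := fun i hi =>
    alg2_weak_add (fun k => z (φ k)) (fun k => y (φ k) i) p wz ((hres i hi).1.comp hφt)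
  refine ⟨(hSmem p).2 fun i hi => ?_, fun q hq => ?_⟩
  · exact alg2_demiclosed (T i) (hT_firm i hi) (hTn i hi) (fun k => y (φ k) i) p K
      (fun k => ky i hi _) (wy i hi) ((hres i hi).2.comp hφt)
  · obtain ⟨ρ, hρ, hρn⟩ := henergy q hq
    -- componentwise lower bound
    have hlow : ∀ n ≥ 1, ∀ i ∈ Finset.Icc 1 M,
        (f i p + h i p) - (f i q + h i q) + inner ℝ (sg i p) (y n i - p)
          + inner ℝ (h' i p) (z n - p) - K * ‖y n i - z n‖ - β n * (K * (K + ‖q‖))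
        ≤ f i (y n i) - f i q - inner ℝ (d (n + 1) i) (y n i - q) := by
      intro n hn i hi
      have c1 := hsg i hi p (y n i)
      have c2 := alg2_grad_ineq (h i) (hh_conv i hi) _ p (hh_grad i hi p) (z n)
      have c3 := alg2_grad_ineq (h i) (hh_conv i hi) _ (z n) (hh_grad i hi (z n)) q
      have c4 : inner ℝ (d (n + 1) i) (y n i - q) = inner ℝ (h' i (z n)) (q - z n)
          - inner ℝ (h' i (z n)) (y n i - z n) + β n * inner ℝ (d n i) (y n i - q) := by
        rw [hd n hn i hi, inner_add_left, inner_neg_left, inner_smul_left, ← inner_sub_right]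
        have : q - z n - (y n i - z n) = -(y n i - q) := by abel
        rw [this, inner_neg_right]
        simp
      have c5 := neg_le_of_abs_le (abs_real_inner_le_norm (h' i (z n)) (y n i - z n))
      have c6 := mul_le_mul_of_nonneg_right (kg i hi n) (norm_nonneg (y n i - z n))
      have c7 := real_inner_le_norm (d n i) (y n i - q)
      have c8 : ‖y n i - q‖ ≤ K + ‖q‖ := (norm_sub_le _ _).trans (by linarith [ky i hi n])
      have c9 := mul_le_mul (kd i hi n) c8 (norm_nonneg _) hK0
      have c10 := mul_le_mul_of_nonneg_left (c7.trans c9) (hβ_range n).1.le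
      linarith
    have hcomb : ∀ n ≥ 1, ∑ i ∈ Finset.Icc 1 M,
        ((f i p + h i p) - (f i q + h i q) + inner ℝ (sg i p) (y n i - p)
          + inner ℝ (h' i p) (z n - p) - K * ‖y n i - z n‖ - β n * (K * (K + ‖q‖))) ≤ ρ n / 2 := by
      intro n hn
      refine (Finset.sum_le_sum (hlow n hn)).trans ?_
      have h1 := hρn n hn
      rw [Finset.sum_add_distrib, ← Finset.mul_sum] at h1
      have h2 : 0 ≤ ∑ i ∈ Finset.Icc 1 M,
          (‖z n - y n i‖ ^ 2 + (1 - α n) * ‖y n i - T i (y n i)‖ ^ 2) :=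
        Finset.sum_nonneg fun j _ => add_nonneg (sq_nonneg _)
          (mul_nonneg (sub_nonneg.2 (hα_range n).2) (sq_nonneg _))
      have h3 : lam n * (2 * ∑ i ∈ Finset.Icc 1 M,
          (f i (y n i) - f i q - inner ℝ (d (n + 1) i) (y n i - q))) ≤ lam n * ρ n := by linarith
      have h4 := le_of_mul_le_mul_left h3 (hlam_pos n)
      linarith
    have wsub : ∀ (v : ℕ → H), (∀ r : H, Tendsto (fun k => inner ℝ (v k) r) atTop (𝓝 (inner ℝ p r)))
        → ∀ g : H, Tendsto (fun k => inner ℝ g (v k - p)) atTop (𝓝 0) := by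
      intro v hv g
      have := (hv g).sub_const (inner ℝ p g)
      rw [sub_self] at this
      refine this.congr fun k => ?_
      rw [← inner_sub_left, real_inner_comm]
    have hlimL : Tendsto (fun k => ∑ i ∈ Finset.Icc 1 M,
        ((f i p + h i p) - (f i q + h i q) + inner ℝ (sg i p) (y (φ k) i - p)
          + inner ℝ (h' i p) (z (φ k) - p) - K * ‖y (φ k) i - z (φ k)‖
          - β (φ k) * (K * (K + ‖q‖)))) atTop
        (𝓝 (∑ i ∈ Finset.Icc 1 M, ((f i p + h i p) - (f i q + h i q)))) := by
      refine tendsto_finsetSum _ fun i hi => ?_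
      have := (((((wsub _ (wy i hi) (sg i p)).const_add ((f i p + h i p) - (f i q + h i q))).add
        (wsub _ wz (h' i p))).sub (((hres i hi).1.comp hφt).const_mul K)).sub
        ((hβ_lim.comp hφt).mul_const (K * (K + ‖q‖))))
      simpa using this
    have hlimR : Tendsto (fun k => ρ (φ k) / 2) atTop (𝓝 0) := by
      simpa using (hρ.comp hφt).div_const 2
    have hfin := le_of_tendsto_of_tendsto hlimL hlimR
      ((hφt.eventually_ge_atTop 1).mono fun k hk => hcomb _ hk)
    rw [Finset.sum_sub_distrib, ← hψ, ← hψ] at hfin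
    linarith
end
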